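/- Let (S, n) be a regular local ring of dimension e ≥ 1 containing a field, let P be a prime ideal of S with ht_S(P) = e − 1, and let g ∈ n be an element such that the ideal P + (g) is n-primary. Then there is a short exact sequence 0 → H_P^{e−1}(S) → (H_P^{e−1}(S))_g → H_n^e(S) → 0, where the first map is the natural localization map. -/

import Mathlib

open CategoryTheory Opposite

noncomputable section

/-- Krull dimension of the support of a module. -/
def moduleSuppDim (R : Type) [CommRing R] (M : Type) [AddCommGroup M] [Module R M] :
    WithBot ℕ∞ :=
  Order.krullDim (Module.support R M)

/-- `M` has injective dimension at most `n` (as `R`-module), characterized by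
vanishing of `Ext^i(N, M)` for all `i > n`. -/
def injDimLE (R : Type) [CommRing R] (M : Type) [AddCommGroup M] [Module R M] (n : ℕ) : Prop :=
  ∀ (N : ModuleCat R) (i : ℕ), n < i →
    Subsingleton (((Ext R (ModuleCat R) i).obj (op N)).obj (ModuleCat.of R M))

/-- The injective dimension of `M` as an `R`-module, valued in `ℕ∞`. -/
def injDim (R : Type) [CommRing R] (M : Type) [AddCommGroup M] [Module R M] : ℕ∞ :=
  sInf {n : ℕ∞ | ∃ m : ℕ, (m : ℕ∞) = n ∧ injDimLE R M m}

/-- The height of an ideal: the infimum of the heights of primes containing it. -/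
def idealHeight (R : Type) [CommRing R] (I : Ideal R) : ℕ∞ :=
  sInf {h : ℕ∞ | ∃ p : PrimeSpectrum R, I ≤ p.asIdeal ∧ Order.height p = h}

/-- A regular local ring: a Noetherian local ring whose maximal ideal can be generated
by `dim R` elements. -/
def IsRegularLocal (R : Type) [CommRing R] [IsLocalRing R] : Prop :=
  IsNoetherianRing R ∧
    ∃ s : Finset R, Ideal.span (s : Set R) = IsLocalRing.maximalIdeal R ∧
      (s.card : WithBot ℕ∞) = ringKrullDim R

/-- A ring contains a field if some subring of it is a field. -/
def ContainsField (R : Type) [CommRing R] : Prop :=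
  ∃ k : Subring R, IsField k

/-- The underlying module of the `i`-th local cohomology of `R` with support in `I`. -/
abbrev LocalCohomologyMod (R : Type) [CommRing R] (I : Ideal R) (i : ℕ) : Type :=
  (localCohomology I i).obj (ModuleCat.of R R)

end

open IsLocalRing in
lemma lcx_dim_quot {R : Type} [CommRing R] [IsLocalRing R] [IsNoetherianRing R] (y : R)
    (hy : y ∈ maximalIdeal R) (d : ℕ) (hd : ((d + 1 : ℕ) : WithBot ℕ∞) ≤ ringKrullDim R) :
    (d : WithBot ℕ∞) ≤ ringKrullDim (R ⧸ Ideal.span {y}) := by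
  have h := Ideal.height_le_ringKrullDim_quotient_add_one (p := maximalIdeal R) hy
  rw [maximalIdeal_height_eq_ringKrullDim] at h
  have := hd.trans h
  push_cast at this
  obtain ⟨x, hx⟩ : ∃ x : WithBot ℕ∞, x = ringKrullDim (R ⧸ Ideal.span {y}) := ⟨_, rfl⟩
  rw [← hx] at this ⊢
  induction x using WithBot.recBotCoe with
  | bot =>
    rw [WithBot.bot_add, le_bot_iff] at this
    exact absurd this (by
      have h2 : ((d : WithBot ℕ∞) + 1) = (((d + 1 : ℕ) : ℕ∞) : WithBot ℕ∞) := by push_cast; rfl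
      rw [h2]; exact WithBot.coe_ne_bot)
  | coe x =>
    have h3 : ((d : ℕ∞) + 1) ≤ x + 1 := by exact_mod_cast this
    have h4 : (d : ℕ∞) ≤ x := (ENat.add_le_add_iff_right ENat.one_ne_top).mp h3
    exact_mod_cast h4

open IsLocalRing in
lemma lcx_map_max {R : Type} [CommRing R] [IsLocalRing R] (y : R)
    [IsLocalRing (R ⧸ Ideal.span {y})] :
    maximalIdeal (R ⧸ Ideal.span {y}) = (maximalIdeal R).map (Ideal.Quotient.mk _) := by
  have := ((local_hom_TFAE (Ideal.Quotient.mk (Ideal.span {y}))).out 0 4).mp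
    (IsLocalHom.of_surjective _ Ideal.Quotient.mk_surjective)
  rw [← this, Ideal.map_comap_of_surjective _ Ideal.Quotient.mk_surjective]

open IsLocalRing in
lemma lcx_local_quot {R : Type} [CommRing R] [IsLocalRing R] (y : R)
    (hy : y ∈ maximalIdeal R) : IsLocalRing (R ⧸ Ideal.span {y}) := by
  have : Nontrivial (R ⧸ Ideal.span {y}) := Ideal.Quotient.nontrivial_iff.mpr (by
    rw [Ne, Ideal.span_singleton_eq_top]; exact hy)
  exact IsLocalRing.of_surjective' (Ideal.Quotient.mk _) Ideal.Quotient.mk_surjective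

open IsLocalRing in
lemma lcx_dom (d : ℕ) : ∀ (R : Type) [CommRing R] [IsLocalRing R] [IsNoetherianRing R]
    (s : Finset R), Ideal.span (s : Set R) = maximalIdeal R → s.card ≤ d →
    (d : WithBot ℕ∞) ≤ ringKrullDim R → IsDomain R := by
  induction d with
  | zero =>
    intro R _ _ _ s hs hc hd
    have : s = ∅ := by simpa using hc
    subst this
    have : IsField R := by
      rw [isField_iff_maximalIdeal_eq, ← hs]; simp
    exact this.isDomain
  | succ d ih =>
    intro R _ _ _ s hs hc hd
    classical
    have hnf : ringKrullDim R ≠ 0 := by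
      intro h; rw [h] at hd
      exact absurd hd (by norm_cast)
    have hsq : ¬ maximalIdeal R ≤ maximalIdeal R ^ 2 := by
      intro h
      refine hnf (ringKrullDim_eq_zero_of_isField ?_)
      rw [isField_iff_maximalIdeal_eq]
      refine Submodule.eq_bot_of_le_smul_of_le_jacobson_bot (maximalIdeal R) _
        (IsNoetherian.noetherian _) ?_ (maximalIdeal_le_jacobson _)
      rwa [smul_eq_mul, ← pow_two]
    have hmin : ∀ q ∈ minimalPrimes R, ¬ maximalIdeal R ≤ q := by
      intro q hq h
      have hqp : q.IsPrime := hq.1.1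
      have : q = maximalIdeal R := le_antisymm (le_maximalIdeal hqp.ne_top) h
      have h0 : q.height = 0 := by
        rw [Ideal.height_eq_zero_iff]; exact hq
      rw [this] at h0
      refine hnf ?_
      rw [← maximalIdeal_height_eq_ringKrullDim, h0]; rfl
    have hfin := minimalPrimes.finite_of_isNoetherianRing R
    have hav : ∃ y ∈ maximalIdeal R, y ∉ maximalIdeal R ^ 2 ∧ ∀ q ∈ minimalPrimes R, y ∉ q := by
      by_contra! hcon
      have := (Ideal.subset_union_prime (s := insert (maximalIdeal R ^ 2) hfin.toFinset)
        (f := id) (maximalIdeal R ^ 2) (maximalIdeal R ^ 2) (by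
          intro i hi h1 _
          have : i ∈ minimalPrimes R := by simpa [h1] using hi
          exact this.1.1) (I := maximalIdeal R)).mp (by
          intro y hy
          by_cases h2 : y ∈ maximalIdeal R ^ 2
          · simp only [Set.mem_iUnion]
            exact ⟨_, by simp, h2⟩
          · obtain ⟨q, hq, hyq⟩ := hcon y hy h2
            simp only [Set.mem_iUnion]
            exact ⟨q, by simp [hq], hyq⟩)
      obtain ⟨i, hi, hle⟩ := this
      rw [Finset.mem_insert] at hi
      rcases hi with rfl | hi
      · exact hsq hle
      · exact hmin i (by simpa using hi) hle
    obtain ⟨y, hy, hy2, hyq⟩ := hav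
    have hex : ∃ i ∈ s, Ideal.span (insert y ((s.erase i : Finset R) : Set R)) = maximalIdeal R := by
      have hy' := hy
      rw [← hs, Submodule.mem_span_finset] at hy'
      obtain ⟨a, -, ha⟩ := hy'
      have : ∃ i ∈ s, a i ∉ maximalIdeal R := by
        by_contra! hall
        apply hy2
        rw [← ha, pow_two]
        refine Ideal.sum_mem _ fun i hi => Ideal.mul_mem_mul (hall i hi) ?_
        rw [← hs]; exact Ideal.subset_span hi
      obtain ⟨i, hi, hai⟩ := this
      refine ⟨i, hi, le_antisymm ?_ ?_⟩
      · rw [Ideal.span_le, Set.insert_subset_iff]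
        refine ⟨hy, fun z hz => ?_⟩
        rw [← hs]; exact Ideal.subset_span (Finset.mem_of_mem_erase hz)
      · rw [← hs, Ideal.span_le]
        intro z hz
        by_cases hzi : z = i
        · subst hzi
          have hu : IsUnit (a z) := by simpa using hai
          obtain ⟨u, hu⟩ := hu
          rw [← Finset.add_sum_erase _ _ hi] at ha
          have : a z * z ∈ Ideal.span (insert y ((s.erase z : Finset R) : Set R)) := by
            have : a z * z = y - ∑ x ∈ s.erase z, a x • x := by rw [← ha]; simp
            rw [this]
            refine Ideal.sub_mem _ (Ideal.subset_span (Set.mem_insert _ _)) (Ideal.sum_mem _ ?_)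
            intro j hj
            exact Ideal.mul_mem_left _ _ (Ideal.subset_span (Set.mem_insert_of_mem _ hj))
          have h3 := Ideal.mul_mem_left _ (↑u⁻¹ : R) this
          rw [← hu, ← mul_assoc] at h3
          simpa using h3
        · exact Ideal.subset_span (Set.mem_insert_of_mem _ (by
            rw [Finset.mem_coe, Finset.mem_erase]; exact ⟨hzi, hz⟩))
    obtain ⟨i, hi, hspan⟩ := hex
    have := lcx_local_quot y hy
    have hdq : IsDomain (R ⧸ Ideal.span {y}) := by
      refine ih _ ((s.erase i).image (Ideal.Quotient.mk _)) ?_ ?_ (lcx_dim_quot y hy d hd)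
      · rw [lcx_map_max y, ← hspan, Ideal.map_span, Set.image_insert_eq, Finset.coe_image]
        have : (Ideal.Quotient.mk (Ideal.span {y})) y = 0 :=
          Ideal.Quotient.eq_zero_iff_mem.mpr (Ideal.mem_span_singleton_self y)
        rw [this, Ideal.span_insert]; simp
      · refine Finset.card_image_le.trans ?_
        rw [Finset.card_erase_of_mem hi]; omega
    have hyp : (Ideal.span {y}).IsPrime := (Ideal.Quotient.isDomain_iff_prime _).mp hdq
    obtain ⟨q, hq, hqy⟩ := Ideal.exists_minimalPrimes_le (I := ⊥) (J := Ideal.span {y}) bot_le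
    have hqy' : y ∉ q := hyq q hq
    have hqp : q.IsPrime := hq.1.1
    have hq0 : q = ⊥ := by
      refine Submodule.eq_bot_of_le_smul_of_le_jacobson_bot (maximalIdeal R) _
        (IsNoetherian.noetherian _) ?_ (maximalIdeal_le_jacobson _)
      intro z hz
      obtain ⟨a, rfl⟩ := Ideal.mem_span_singleton'.mp (hqy hz)
      rw [mul_comm]
      exact Ideal.mul_mem_mul hy ((hqp.mem_or_mem hz).resolve_right hqy')
    rw [hq0] at hqp
    exact IsDomain.of_bot_isPrime R

open IsLocalRing RingTheory.Sequence in
lemma lcx_reg (d : ℕ) : ∀ (R : Type) [CommRing R] [IsLocalRing R] [IsNoetherianRing R]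
    (l : List R), Ideal.ofList l = maximalIdeal R → l.length = d →
    (d : WithBot ℕ∞) ≤ ringKrullDim R → IsWeaklyRegular R l := by
  induction d with
  | zero =>
    intro R _ _ _ l hl hlen hd
    rw [List.length_eq_zero_iff.mp hlen]
    exact IsWeaklyRegular.nil R R
  | succ d ih =>
    intro R _ _ _ l hl hlen hd
    classical
    obtain ⟨y, l', rfl⟩ : ∃ y l', l = y :: l' := by
      cases l with
      | nil => simp at hlen
      | cons y l' => exact ⟨y, l', rfl⟩
    have hlen' : l'.length = d := by simpa using hlen
    have hdom : IsDomain R := lcx_dom (d+1) R (y :: l').toFinset (by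
      rw [← hl]; simp [Ideal.ofList]; rfl) ((List.toFinset_card_le _).trans hlen.le) hd
    have hy : y ∈ maximalIdeal R := by
      rw [← hl]; exact Ideal.subset_span (by simp)
    have := lcx_local_quot y hy
    have hmap : Ideal.ofList (l'.map (Ideal.Quotient.mk (Ideal.span {y}))) =
        maximalIdeal (R ⧸ Ideal.span {y}) := by
      rw [lcx_map_max y, ← hl, ← Ideal.map_ofList, Ideal.ofList_cons, Ideal.map_sup,
        Ideal.map_quotient_self, bot_sup_eq]
    have h1 := ih (R ⧸ Ideal.span {y}) (l'.map (Ideal.Quotient.mk _)) hmap (by simpa using hlen')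
      (lcx_dim_quot y hy d hd)
    have hy0 : y ≠ 0 := by
      rintro rfl
      have h2 : ringKrullDim R ≤ (maximalIdeal R).spanFinrank :=
        ringKrullDim_le_spanFinrank_maximalIdeal R
      have h3 : (maximalIdeal R).spanFinrank ≤ d := by
        have : maximalIdeal R = Submodule.span R (l'.toFinset : Set R) := by
          rw [← hl, Ideal.ofList_cons]; simp [Ideal.ofList]
        rw [this]
        refine (Submodule.spanFinrank_span_le_ncard_of_finite (Finset.finite_toSet _)).trans ?_
        rw [Set.ncard_coe_finset]
        exact (List.toFinset_card_le _).trans hlen'.le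
      have h5 : ((maximalIdeal R).spanFinrank : WithBot ℕ∞) ≤ (d : WithBot ℕ∞) := by
        exact_mod_cast h3
      have h4 := hd.trans (h2.trans h5)
      have : d + 1 ≤ d := by exact_mod_cast h4
      omega
    refine IsWeaklyRegular.cons ?_ ?_
    · exact IsSMulRegular.of_ne_zero hy0
    · have e : (R ⧸ Ideal.span {y}) ≃ₗ[R] QuotSMulTop y R := Submodule.quotEquivOfEq _ _ (by
        ext z; simp [Submodule.mem_smul_pointwise_iff_exists, Ideal.mem_span_singleton', mul_comm])
      rw [← e.isWeaklyRegular_congr]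
      exact (isWeaklyRegular_map_algebraMap_iff (R ⧸ Ideal.span {y}) (R ⧸ Ideal.span {y}) l').mp h1

open IsLocalRing in
lemma lcx_artin {B : Type} [CommRing B] [IsLocalRing B] [IsNoetherianRing B] (j : ℕ) :
    IsArtinianRing (B ⧸ maximalIdeal B ^ j) := by
  rw [isArtinianRing_iff_isNoetherianRing_krullDimLE_zero]
  refine ⟨inferInstance, ?_⟩
  rw [Ring.krullDimLE_zero_iff]
  intro I hI
  have h1 : (I.comap (Ideal.Quotient.mk (maximalIdeal B ^ j))).IsPrime := inferInstance
  have h2 : maximalIdeal B ≤ I.comap (Ideal.Quotient.mk (maximalIdeal B ^ j)) := by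
    refine h1.le_of_pow_le (n := j) ?_
    intro x hx
    rw [Ideal.mem_comap, Ideal.Quotient.eq_zero_iff_mem.mpr hx]
    exact I.zero_mem
  have h3 : I.comap (Ideal.Quotient.mk (maximalIdeal B ^ j)) = maximalIdeal B :=
    le_antisymm (le_maximalIdeal h1.ne_top) h2
  have h4 : (I.comap (Ideal.Quotient.mk (maximalIdeal B ^ j))).IsMaximal := by
    rw [h3]; infer_instance
  rw [← Ideal.map_comap_of_surjective _ Ideal.Quotient.mk_surjective I]
  exact Ideal.IsMaximal.map_of_surjective_of_ker_le Ideal.Quotient.mk_surjective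
    (by rw [Ideal.mk_ker, h3]
        intro x hx
        have : x ∈ I.comap (Ideal.Quotient.mk (maximalIdeal B ^ j)) := by
          rw [Ideal.mem_comap, Ideal.Quotient.eq_zero_iff_mem.mpr hx]
          exact I.zero_mem
        rwa [h3] at this)

open IsLocalRing in
lemma lcx_chev {B : Type} [CommRing B] [IsLocalRing B] [IsNoetherianRing B]
    [IsAdicComplete (maximalIdeal B) B] (J : ℕ → Ideal B) (hJ : Antitone J) (h0 : ⨅ k, J k = ⊥)
    (l : ℕ) : ∃ k, J k ≤ maximalIdeal B ^ l := by
  classical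
  have hst : ∀ j, ∃ K, ∀ k, K ≤ k → J K ⊔ maximalIdeal B ^ j = J k ⊔ maximalIdeal B ^ j := by
    intro j
    have := lcx_artin (B := B) j
    obtain ⟨K, hK⟩ := IsArtinian.monotone_stabilizes (R := B ⧸ maximalIdeal B ^ j)
      (M := B ⧸ maximalIdeal B ^ j)
      ⟨fun k => OrderDual.toDual ((J k).map (Ideal.Quotient.mk (maximalIdeal B ^ j))),
        fun a b hab => Ideal.map_mono (hJ hab)⟩
    refine ⟨K, fun k hk => ?_⟩
    have h1 : (J K).map (Ideal.Quotient.mk (maximalIdeal B ^ j)) =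
      (J k).map (Ideal.Quotient.mk (maximalIdeal B ^ j)) := hK k hk
    have h2 := congrArg (Ideal.comap (Ideal.Quotient.mk (maximalIdeal B ^ j))) h1
    simpa [Ideal.comap_map_of_surjective' _ Ideal.Quotient.mk_surjective] using h2
  choose K0 hK0 using hst
  let K : ℕ → ℕ := fun j => (∑ i ∈ Finset.range (j+1), K0 i) + j
  have hKmono : Monotone K := by
    intro a b hab
    exact Nat.add_le_add (Finset.sum_le_sum_of_subset (by
      intro x; simp; omega)) hab
  have hK0K : ∀ j, K0 j ≤ K j := fun j =>
    (Finset.single_le_sum (f := K0) (fun _ _ => Nat.zero_le _) (by simp)).trans (Nat.le_add_right _ _)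
  have hK : ∀ j k, K j ≤ k → J (K j) ≤ J k ⊔ maximalIdeal B ^ j := by
    intro j k hk
    rw [← hK0 j k ((hK0K j).trans hk), hK0 j (K j) (hK0K j)]
    exact le_sup_left
  by_contra! hcon
  obtain ⟨x0, hx0, hx0'⟩ := SetLike.not_le_iff_exists.mp (hcon (K l))
  have hstep : ∀ j (x : J (K j)), ∃ y : J (K (j+1)), (x : B) - y ∈ maximalIdeal B ^ j := by
    rintro j ⟨x, hx⟩
    obtain ⟨y, hy, z, hz, rfl⟩ := Submodule.mem_sup.mp (hK j (K (j+1)) (hKmono (Nat.le_succ j)) hx)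
    exact ⟨⟨y, hy⟩, by simpa using hz⟩
  choose nx hnx using hstep
  let x : ∀ j : ℕ, J (K (l + j)) := fun j => Nat.rec ⟨x0, hx0⟩ (fun j y => nx (l+j) y) j
  obtain ⟨X, hX⟩ : ∃ X : ℕ → B, ∀ j, X j = (x j).1 := ⟨_, fun _ => rfl⟩
  have hXJ : ∀ j, X j ∈ J (K (l + j)) := fun j => by rw [hX]; exact (x j).2
  have hX0 : X 0 = x0 := hX 0
  have hx1 : ∀ j, X j - X (j+1) ∈ maximalIdeal B ^ (l+j) := fun j => by
    rw [hX, hX]; exact hnx (l+j) (x j)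
  have hx2 : ∀ i j, X i - X (i+j) ∈ maximalIdeal B ^ (l+i) := by
    intro i j
    induction j with
    | zero => simp
    | succ j ih =>
      have := Ideal.add_mem _ ih (Ideal.pow_le_pow_right (show l + i ≤ l + (i+j) by omega)
        (hx1 (i+j)))
      simpa [add_assoc] using this
  obtain ⟨L, hL⟩ := IsPrecomplete.prec' (I := maximalIdeal B) X (by
    intro m n hmn
    rw [SModEq.sub_mem]
    obtain ⟨j, rfl⟩ := Nat.exists_eq_add_of_le hmn
    simpa using Ideal.pow_le_pow_right (show m ≤ l + m by omega) (hx2 m j))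
  have hL' : ∀ j, X j - L ∈ maximalIdeal B ^ j := by
    intro j
    have := SModEq.sub_mem.mp (hL j)
    simpa using this
  have hLk : ∀ k, L ∈ J k := by
    intro k
    rw [← Ideal.Quotient.eq_zero_iff_mem]
    refine IsHausdorff.haus' (I := maximalIdeal B) (M := B ⧸ J k) _ ?_
    intro j
    rw [SModEq.zero]
    have h1 := hL' (j + k)
    have h2 : X (j+k) ∈ J k := hJ (by simp only [K]; omega) (hXJ (j+k))
    have h3 : (Ideal.Quotient.mk (J k)) L = (L - X (j+k)) • (1 : B ⧸ J k) := by
      rw [Algebra.smul_def, mul_one, Ideal.Quotient.algebraMap_eq, map_sub,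
        Ideal.Quotient.eq_zero_iff_mem.mpr h2, sub_zero]
    rw [h3]
    refine Submodule.smul_mem_smul ?_ trivial
    rw [← neg_mem_iff, neg_sub]
    exact Ideal.pow_le_pow_right (by omega) h1
  have hL0 : L = 0 := by
    have : L ∈ ⨅ k, J k := by simpa [Ideal.mem_iInf] using hLk
    rwa [h0] at this
  have h5 := hL' l
  have h6 := hx2 0 l
  rw [hL0, sub_zero] at h5
  rw [zero_add, add_zero, hX0] at h6
  exact hx0' (by simpa using Ideal.add_mem _ h6 h5)

open IsLocalRing in
lemma lcx_compl_noeth (R : Type) [CommRing R] [IsLocalRing R] [IsNoetherianRing R] :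
    IsNoetherianRing (AdicCompletion (maximalIdeal R) R) := by
  classical
  obtain ⟨s, hs⟩ := IsNoetherian.noetherian (maximalIdeal R)
  let T := MvPolynomial s R
  let J := MvPolynomial.idealOfVars s R
  let A := AdicCompletion J T
  have hJfg : J.FG := IsNoetherian.noetherian J
  have hA : IsNoetherianRing A :=
    isNoetherianRing_of_ringEquiv (MvPowerSeries s R)
      (MvPowerSeries.toAdicCompletionAlgEquiv s R).toRingEquiv
  let Rh := AdicCompletion (maximalIdeal R) R
  let f : T →+* Rh := (MvPolynomial.aeval (R := R) (fun i : s => algebraMap R Rh i)).toRingHom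
  have hf : J.map f = maximalIdeal Rh := by
    have h1 : maximalIdeal Rh = (Ideal.span (s : Set R)).map (algebraMap R Rh) := by
      rw [AdicCompletion.maximalIdeal_eq_map]
      exact congrArg (Ideal.map (algebraMap R Rh)) hs.symm
    rw [h1]
    simp only [J, MvPolynomial.idealOfVars]
    rw [Ideal.map_span, ← Set.range_comp, Ideal.map_span]
    congr 1
    ext x
    simp [f]
  have hfn : ∀ n, J ^ n ≤ (maximalIdeal Rh ^ n).comap f := by
    intro n
    rw [← Ideal.map_le_iff_le_comap, Ideal.map_pow, hf]
  let F : A →+* Rh := IsAdicComplete.liftRingHom (maximalIdeal Rh)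
    (fun n => (Ideal.quotientMap (maximalIdeal Rh ^ n) f (hfn n)).comp
      (AdicCompletion.evalₐ J n : A →+* T ⧸ J ^ n)) (by
      intro m n hmn
      ext x
      obtain ⟨y, hy⟩ := Ideal.Quotient.mk_surjective (AdicCompletion.evalₐ J n x)
      have h2 : AdicCompletion.evalₐ J m x = Ideal.Quotient.mk _ y := by
        obtain ⟨x, rfl⟩ := AdicCompletion.mk_surjective _ _ x
        rw [AdicCompletion.evalₐ_mk] at hy ⊢
        refine (AdicCompletion.Ideal.mk_eq_mk (I := J) hmn x).symm.trans ?_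
        rw [Ideal.Quotient.eq] at hy ⊢
        rw [← neg_mem_iff, neg_sub]
        exact Ideal.pow_le_pow_right hmn hy
      simp [← hy, h2])
  have hF : F.comp (algebraMap T A) = f := by
    refine RingHom.ext fun x => ?_
    refine IsHausdorff.eq_iff_smodEq (I := maximalIdeal Rh) |>.mpr ?_
    intro n
    rw [SModEq.sub_mem]
    have h1 : Ideal.Quotient.mk (maximalIdeal Rh ^ n) (F (algebraMap T A x)) =
        Ideal.Quotient.mk (maximalIdeal Rh ^ n) (f x) := by
      simp only [F]
      rw [IsAdicComplete.mk_liftRingHom]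
      have h2 : AdicCompletion.evalₐ J n (algebraMap T A x) = Ideal.Quotient.mk _ x :=
        AdicCompletion.evalₐ_of J n x
      simp [h2]
    simpa using Ideal.Quotient.eq.mp h1
  have : IsAdicComplete (J.map (algebraMap T A)) A := AdicCompletion.isAdicComplete_self J hJfg
  have hJF : (J.map (algebraMap T A)).map F = maximalIdeal Rh := by
    rw [Ideal.map_map, hF, hf]
  have : IsHausdorff ((J.map (algebraMap T A)).map F) Rh := by
    rw [hJF]; infer_instance
  refine isNoetherianRing_of_surjective A Rh F
    (surjective_of_mk_map_comp_surjective (I := J.map (algebraMap T A)) F ?_)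
  intro z
  obtain ⟨z, rfl⟩ := Ideal.Quotient.mk_surjective z
  obtain ⟨w, hw⟩ := (AdicCompletion.residueField_map_bijective R).2 (residue _ z)
  obtain ⟨w, rfl⟩ := residue_surjective w
  refine ⟨algebraMap T A (algebraMap R T w), ?_⟩
  rw [RingHom.comp_apply, ← RingHom.comp_apply F, hF]
  rw [IsLocalRing.ResidueField.map_residue] at hw
  have h3 := (Ideal.Quotient.mk_eq_mk_iff_sub_mem _ _).mp hw
  rw [Ideal.Quotient.mk_eq_mk_iff_sub_mem, hJF]
  convert h3 using 2
  simp [f, T, MvPolynomial.algebraMap_eq]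
  rfl

/-- symbolic power -/
noncomputable def lcx_symb {A : Type} [CommRing A] (Q : Ideal A) [Q.IsPrime] (t : ℕ) : Ideal A :=
  ((Q ^ t).map (algebraMap A (Localization.AtPrime Q))).comap
    (algebraMap A (Localization.AtPrime Q))

lemma lcx_mem_symb {A : Type} [CommRing A] (Q : Ideal A) [Q.IsPrime] (t : ℕ) (x : A) :
    x ∈ lcx_symb Q t ↔ ∃ s, s ∉ Q ∧ s * x ∈ Q ^ t := by
  rw [lcx_symb, Ideal.mem_comap,
    IsLocalization.algebraMap_mem_map_algebraMap_iff Q.primeCompl]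
  rfl

lemma lcx_symb_anti {A : Type} [CommRing A] (Q : Ideal A) [Q.IsPrime] : Antitone (lcx_symb Q) := by
  intro a b hab
  exact Ideal.comap_mono (Ideal.map_mono (Ideal.pow_le_pow_right hab))

lemma lcx_pow_le_symb {A : Type} [CommRing A] (Q : Ideal A) [Q.IsPrime] (t : ℕ) :
    Q ^ t ≤ lcx_symb Q t := Ideal.le_comap_map

lemma lcx_symb_le {A : Type} [CommRing A] (Q : Ideal A) [Q.IsPrime] (t : ℕ) (ht : t ≠ 0) :
    lcx_symb Q t ≤ Q := by
  intro x hx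
  obtain ⟨s, hs, h⟩ := (lcx_mem_symb Q t x).mp hx
  exact ((‹Q.IsPrime›.mem_or_mem (Ideal.pow_le_self ht h))).resolve_left hs

lemma lcx_symb_reg {A : Type} [CommRing A] (Q : Ideal A) [Q.IsPrime] (t : ℕ) (g x : A) (hg : g ∉ Q)
    (hx : g * x ∈ lcx_symb Q t) : x ∈ lcx_symb Q t := by
  rw [lcx_mem_symb] at hx ⊢
  obtain ⟨s, hs, h⟩ := hx
  exact ⟨s * g, fun h => (‹Q.IsPrime›.mem_or_mem h).elim hs hg, by rwa [mul_assoc]⟩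

lemma lcx_symb_inf {A : Type} [CommRing A] [IsDomain A] [IsNoetherianRing A] (Q : Ideal A)
    [Q.IsPrime] : ⨅ k, lcx_symb Q k = ⊥ := by
  rw [eq_bot_iff]
  intro x hx
  have h1 : algebraMap A (Localization.AtPrime Q) x ∈
      ⨅ i, (Q.map (algebraMap A (Localization.AtPrime Q))) ^ i := by
    rw [Ideal.mem_iInf] at hx ⊢
    intro i
    have := hx i
    rwa [lcx_symb, Ideal.mem_comap, Ideal.map_pow] at this
  rw [Ideal.iInf_pow_eq_bot_of_isLocalRing _ (by
    rw [Localization.AtPrime.map_eq_maximalIdeal]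
    exact Ideal.IsPrime.ne_top inferInstance)] at h1
  have h2 : Function.Injective (algebraMap A (Localization.AtPrime Q)) :=
    IsLocalization.injective _ Q.primeCompl_le_nonZeroDivisors
  exact (map_eq_zero_iff _ h2).mp h1

open IsLocalRing in
lemma lcx_symb_chev {S : Type} [CommRing S] [IsLocalRing S] [IsNoetherianRing S] (e : ℕ)
    (s : Finset S) (hs : Ideal.span (s : Set S) = maximalIdeal S) (hc : s.card ≤ e)
    (hd : (e : WithBot ℕ∞) ≤ ringKrullDim S) (P : Ideal S) [P.IsPrime] (l : ℕ) :
    ∃ k, lcx_symb P k ≤ maximalIdeal S ^ l := by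
  classical
  let Sh := AdicCompletion (maximalIdeal S) S
  have : IsNoetherianRing Sh := lcx_compl_noeth S
  have hmax : maximalIdeal Sh = (maximalIdeal S).map (algebraMap S Sh) :=
    AdicCompletion.maximalIdeal_eq_map
  have hflat : Module.Flat S Sh := AdicCompletion.flat_of_isNoetherian _
  have hff : Module.FaithfullyFlat S Sh := Module.FaithfullyFlat.of_flat_of_isLocalHom
  have hlo : (maximalIdeal Sh).LiesOver (maximalIdeal S) :=
    ⟨(IsLocalRing.maximalIdeal_comap (algebraMap S Sh)).symm⟩
  have hdim : (e : WithBot ℕ∞) ≤ ringKrullDim Sh := by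
    refine hd.trans ?_
    rw [← maximalIdeal_height_eq_ringKrullDim, ← maximalIdeal_height_eq_ringKrullDim]
    rw [Ideal.height_eq_height_add_of_liesOver_of_hasGoingDown (maximalIdeal S) (maximalIdeal Sh)]
    exact_mod_cast le_self_add
  have hdom : IsDomain Sh := by
    refine lcx_dom e Sh (s.image (algebraMap S Sh)) ?_ (Finset.card_image_le.trans hc) hdim
    rw [hmax, Finset.coe_image, ← Ideal.map_span]
    exact congrArg (Ideal.map (algebraMap S Sh)) hs
  obtain ⟨⟨Q, hQ⟩, hQP⟩ := (PrimeSpectrum.comap_surjective_of_faithfullyFlat (A := S) (B := Sh))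
    ⟨P, inferInstance⟩
  have hQP' : Q.comap (algebraMap S Sh) = P := congrArg PrimeSpectrum.asIdeal hQP
  obtain ⟨k, hk⟩ := lcx_chev (lcx_symb Q) (lcx_symb_anti Q) (lcx_symb_inf Q) l
  refine ⟨k, fun x hx => ?_⟩
  have h1 : algebraMap S Sh x ∈ lcx_symb Q k := by
    rw [lcx_mem_symb] at hx ⊢
    obtain ⟨c, hc, hcx⟩ := hx
    refine ⟨algebraMap S Sh c, ?_, ?_⟩
    · intro h
      apply hc
      rw [← hQP']; exact h
    · rw [← map_mul]
      have h2 : (P ^ k).map (algebraMap S Sh) ≤ Q ^ k := by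
        rw [Ideal.map_pow]
        refine Ideal.pow_right_mono ?_ k
        rw [Ideal.map_le_iff_le_comap, hQP']
      exact h2 (Ideal.mem_map_of_mem _ hcx)
  have h2 := hk h1
  rw [hmax, ← Ideal.map_pow] at h2
  rw [← Ideal.comap_map_eq_self_of_faithfullyFlat (B := Sh) (maximalIdeal S ^ l)]
  exact h2

open IsLocalRing in
lemma lcx_symb_cof {S : Type} [CommRing S] [IsLocalRing S] [IsNoetherianRing S] (e : ℕ)
    (s : Finset S) (hs : Ideal.span (s : Set S) = maximalIdeal S) (hc : s.card ≤ e)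
    (hd : (e : WithBot ℕ∞) ≤ ringKrullDim S) (P : Ideal S) [P.IsPrime]
    (hP : ∀ q : Ideal S, q.IsPrime → P ≤ q → q = P ∨ q = maximalIdeal S) (k : ℕ) :
    ∃ t, lcx_symb P t ≤ P ^ k := by
  classical
  obtain ⟨F, hF⟩ := IsNoetherian.noetherian (lcx_symb P k)
  have hFm : ∀ x ∈ F, x ∈ lcx_symb P k := fun x hx => by
    rw [← hF]; exact Submodule.subset_span hx
  have hu : ∃ u, u ∉ P ∧ ∀ x ∈ lcx_symb P k, u * x ∈ P ^ k := by
    have h1 : ∀ x : S, ∃ c, c ∉ P ∧ (x ∈ F → c * x ∈ P ^ k) := by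
      intro x
      by_cases hx : x ∈ F
      · obtain ⟨c, hc, h⟩ := (lcx_mem_symb P k x).mp (hFm x hx)
        exact ⟨c, hc, fun _ => h⟩
      · exact ⟨1, (Ideal.ne_top_iff_one P).mp (Ideal.IsPrime.ne_top inferInstance),
          fun h => absurd h hx⟩
    choose c hc1 hc2 using h1
    refine ⟨∏ x ∈ F, c x, ?_, ?_⟩
    · intro h
      obtain ⟨x, -, hx⟩ := (Ideal.IsPrime.prod_mem_iff).mp h
      exact hc1 x hx
    · intro x hx
      rw [← hF] at hx
      induction hx using Submodule.span_induction with
      | mem x hx =>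
        rw [← Finset.mul_prod_erase F c hx, mul_right_comm]
        exact Ideal.mul_mem_right _ _ (hc2 x hx)
      | zero => simp
      | add x y _ _ h1 h2 => rw [mul_add]; exact Ideal.add_mem _ h1 h2
      | smul a x _ h => rw [smul_eq_mul, mul_left_comm]; exact Ideal.mul_mem_left _ _ h
  obtain ⟨u, huP, hu⟩ := hu
  have hc : ∃ c, maximalIdeal S ^ c ≤ P ^ k ⊔ Ideal.span {u} := by
    refine Ideal.exists_pow_le_of_le_radical_of_fg ?_ (IsNoetherian.noetherian _)
    rw [Ideal.radical_eq_sInf]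
    refine le_sInf ?_
    rintro q ⟨hq, hqp⟩
    have hPq : P ≤ q := hqp.le_of_pow_le (le_sup_left.trans hq)
    rcases hP q hqp hPq with rfl | rfl
    · exact absurd (hq (Ideal.mem_sup_right (Ideal.mem_span_singleton_self u))) huP
    · exact le_rfl
  obtain ⟨c, hc⟩ := hc
  obtain ⟨k0, hk0⟩ := (maximalIdeal S).exists_pow_inf_eq_pow_smul (M := S) (lcx_symb P k)
  obtain ⟨t, ht⟩ := lcx_symb_chev e s hs ‹_› hd P (k0 + c)
  refine ⟨t + k, fun x hx => ?_⟩
  have h1 : x ∈ maximalIdeal S ^ (k0 + c) • ⊤ ⊓ lcx_symb P k := by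
    refine ⟨?_, lcx_symb_anti P (by omega) hx⟩
    simpa using ht (lcx_symb_anti P (by omega) hx)
  rw [hk0 _ (by omega)] at h1
  have h2 : x ∈ maximalIdeal S ^ c • lcx_symb P k := by
    refine Submodule.smul_mono ?_ inf_le_right h1
    rw [Nat.add_sub_cancel_left]
  refine Submodule.smul_induction_on h2 ?_ fun _ _ => Ideal.add_mem _
  intro r hr n hn
  obtain ⟨a, ha, b, hb, rfl⟩ := Submodule.mem_sup.mp (hc hr)
  obtain ⟨b, rfl⟩ := Ideal.mem_span_singleton'.mp hb
  rw [smul_eq_mul, add_mul, mul_assoc]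
  exact Ideal.add_mem _ (Ideal.mul_mem_right _ _ ha) (Ideal.mul_mem_left _ _ (hu n hn))

noncomputable section

/-- cocycles in degree n of a chain complex in the opposite of modules -/
def lcx_Z {S : Type} [CommRing S] (K : ChainComplex (ModuleCat.{0} S)ᵒᵖ ℕ) (n : ℕ) :
    Submodule S (K.X n).unop :=
  LinearMap.ker (K.d (n+1) n).unop.hom

/-- class map -/
def lcx_zmap {S : Type} [CommRing S] (K : ChainComplex (ModuleCat.{0} S)ᵒᵖ ℕ) (n : ℕ) :
    ModuleCat.of S (lcx_Z K n) ⟶ (K.homology n).unop :=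
  (K.homologyι n ≫ K.descOpcycles (A := op (ModuleCat.of S (lcx_Z K n)))
    (ModuleCat.ofHom (lcx_Z K n).subtype).op (n+1) (by simp) (by
      apply Quiver.Hom.unop_inj
      ext x
      exact x.2)).unop

/-- the morphism attached to an element -/
def lcx_el {S : Type} [CommRing S] {M : ModuleCat.{0} S} (x : M) : ModuleCat.of S S ⟶ M :=
  ModuleCat.ofHom (LinearMap.toSpanSingleton S M x)

lemma lcx_el_apply {S : Type} [CommRing S] {M : ModuleCat.{0} S} (x : M) :
    (lcx_el x).hom (1 : S) = x := by simp [lcx_el]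

lemma lcx_el_ext {S : Type} [CommRing S] {M : ModuleCat.{0} S} (f g : ModuleCat.of S S ⟶ M)
    (h : f.hom (1 : S) = g.hom (1 : S)) : f = g := by
  ext
  exact h

lemma lcx_inj (S : Type) [CommRing S] : Injective (op (ModuleCat.of S S)) := by
  have : Projective (ModuleCat.of S S) := inferInstance
  infer_instance

lemma lcx_p_zmap {S : Type} [CommRing S] (K : ChainComplex (ModuleCat.{0} S)ᵒᵖ ℕ) (n : ℕ)
    (u : K.opcycles n ⟶ op (ModuleCat.of S S)) (z : lcx_Z K n)
    (hz : (K.pOpcycles n ≫ u).unop.hom (1 : S) = z.1) :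
    (K.homologyι n ≫ u).unop.hom (1 : S) = (lcx_zmap K n).hom z := by
  have h : u = K.descOpcycles (A := op (ModuleCat.of S (lcx_Z K n)))
    (ModuleCat.ofHom (lcx_Z K n).subtype).op (n+1) (by simp) (by
      apply Quiver.Hom.unop_inj
      ext x
      exact x.2) ≫ (lcx_el (M := ModuleCat.of S (lcx_Z K n)) z).op := by
    rw [← cancel_epi (K.pOpcycles n), HomologicalComplex.p_descOpcycles_assoc]
    apply Quiver.Hom.unop_inj
    apply lcx_el_ext
    rw [hz]
    simp [lcx_el]
  rw [h, ← Category.assoc]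
  show (lcx_zmap K n).hom ((lcx_el (M := ModuleCat.of S (lcx_Z K n)) z).hom (1 : S)) = _
  rw [lcx_el_apply]

lemma lcx_zmap_surj {S : Type} [CommRing S] (K : ChainComplex (ModuleCat.{0} S)ᵒᵖ ℕ) (n : ℕ) :
    Function.Surjective (lcx_zmap K n).hom := by
  intro h
  have := lcx_inj S
  let u := Injective.factorThru (lcx_el h).op (K.homologyι n)
  have hu : K.homologyι n ≫ u = (lcx_el h).op := Injective.comp_factorThru _ _
  have hz : (K.pOpcycles n ≫ u).unop.hom (1 : S) ∈ lcx_Z K n := by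
    show (K.d (n+1) n ≫ K.pOpcycles n ≫ u).unop.hom (1 : S) = 0
    rw [HomologicalComplex.d_pOpcycles_assoc, Limits.zero_comp]
    rfl
  refine ⟨⟨_, hz⟩, ?_⟩
  rw [← lcx_p_zmap K n u _ rfl, hu]
  exact lcx_el_apply h

lemma lcx_zmap_ker {S : Type} [CommRing S] (K : ChainComplex (ModuleCat.{0} S)ᵒᵖ ℕ) (n j : ℕ)
    (hj : (ComplexShape.down ℕ).next n = j) (z : lcx_Z K n) :
    (lcx_zmap K n).hom z = 0 ↔ ∃ y : (K.X j).unop, (K.d n j).unop.hom y = z.1 := by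
  have := lcx_inj S
  let u : K.opcycles n ⟶ op (ModuleCat.of S S) :=
    K.descOpcycles (lcx_el z.1).op (n+1) (by simp) (by
      apply Quiver.Hom.unop_inj
      apply lcx_el_ext
      show (K.d (n+1) n).unop.hom ((lcx_el z.1).hom (1 : S)) = 0
      rw [lcx_el_apply]; exact z.2)
  have hu : K.pOpcycles n ≫ u = (lcx_el z.1).op := HomologicalComplex.p_descOpcycles _ _ _ _ _
  have h1 := lcx_p_zmap K n u z (by rw [hu]; exact lcx_el_apply z.1)
  rw [← h1]
  constructor
  · intro h
    have h0 : K.homologyι n ≫ u = 0 := by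
      apply Quiver.Hom.unop_inj
      apply lcx_el_ext
      rw [h]; rfl
    let sc : ShortComplex (ModuleCat.{0} S)ᵒᵖ :=
      ShortComplex.mk (K.homologyι n) (K.fromOpcycles n j) (by simp)
    have hex : sc.Exact := ShortComplex.exact_of_f_is_kernel sc (K.homologyIsKernel n j hj)
    let w := hex.descToInjective u h0
    have hw : K.fromOpcycles n j ≫ w = u := hex.comp_descToInjective u h0
    refine ⟨w.unop.hom (1 : S), ?_⟩
    show (K.d n j ≫ w).unop.hom (1 : S) = _
    rw [← K.p_fromOpcycles, Category.assoc, hw, hu]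
    exact lcx_el_apply z.1
  · rintro ⟨y, hy⟩
    have h0 : u = K.fromOpcycles n j ≫ (lcx_el y).op := by
      rw [← cancel_epi (K.pOpcycles n), hu, HomologicalComplex.p_fromOpcycles_assoc]
      apply Quiver.Hom.unop_inj
      apply lcx_el_ext
      show (lcx_el z.1).hom (1 : S) = (K.d n j).unop.hom ((lcx_el y).hom (1 : S))
      rw [lcx_el_apply, lcx_el_apply, hy]
    rw [h0, HomologicalComplex.homologyι_comp_fromOpcycles_assoc, Limits.zero_comp]
    rfl

lemma lcx_zmap_nat {S : Type} [CommRing S] {K L : ChainComplex (ModuleCat.{0} S)ᵒᵖ ℕ} (n : ℕ)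
    (φ : K ⟶ L) (z : lcx_Z L n) (z' : lcx_Z K n) (h : (φ.f n).unop.hom z.1 = z'.1) :
    (HomologicalComplex.homologyMap φ n).unop.hom ((lcx_zmap L n).hom z) =
      (lcx_zmap K n).hom z' := by
  let u : L.opcycles n ⟶ op (ModuleCat.of S S) :=
    L.descOpcycles (lcx_el z.1).op (n+1) (by simp) (by
      apply Quiver.Hom.unop_inj
      apply lcx_el_ext
      show (L.d (n+1) n).unop.hom ((lcx_el z.1).hom (1 : S)) = 0
      rw [lcx_el_apply]; exact z.2)
  have hu : L.pOpcycles n ≫ u = (lcx_el z.1).op := HomologicalComplex.p_descOpcycles _ _ _ _ _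
  have h1 := lcx_p_zmap L n u z (by rw [hu]; exact lcx_el_apply z.1)
  rw [← h1, ← lcx_p_zmap K n (HomologicalComplex.opcyclesMap φ n ≫ u) z']
  · show (HomologicalComplex.homologyMap φ n ≫ L.homologyι n ≫ u).unop.hom (1 : S) = _
    rw [HomologicalComplex.homologyι_naturality_assoc]
  · rw [HomologicalComplex.p_opcyclesMap_assoc, hu, ← h]
    show (φ.f n).unop.hom ((lcx_el z.1).hom (1 : S)) = _
    rw [lcx_el_apply]

end

noncomputable section

/-- the Hom functor, opped -/
abbrev lcx_F {S : Type} [CommRing S] (Y : ModuleCat.{0} S) : ModuleCat.{0} S ⥤ (ModuleCat.{0} S)ᵒᵖ :=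
  ((linearYoneda S (ModuleCat.{0} S)).obj Y).rightOp

/-- the Hom complex -/
abbrev lcx_K {S : Type} [CommRing S] {X : ModuleCat.{0} S} (P : ProjectiveResolution X)
    (Y : ModuleCat.{0} S) : ChainComplex (ModuleCat.{0} S)ᵒᵖ ℕ :=
  ((lcx_F Y).mapHomologicalComplex _).obj P.complex

/-- cocycles -/
def lcx_C {S : Type} [CommRing S] {X : ModuleCat.{0} S} (P : ProjectiveResolution X)
    (Y : ModuleCat.{0} S) (n : ℕ) : Submodule S (P.complex.X n ⟶ Y) where
  carrier := {f | P.complex.d (n+1) n ≫ f = 0}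
  zero_mem' := by simp
  add_mem' := by intro a b ha hb; simp only [Set.mem_ofPred_eq] at *; simp [ha, hb]
  smul_mem' := by intro c a ha; simp only [Set.mem_ofPred_eq] at *; simp [ha]

lemma lcx_C_mem {S : Type} [CommRing S] {X : ModuleCat.{0} S} (P : ProjectiveResolution X)
    (Y : ModuleCat.{0} S) (n : ℕ) (f : P.complex.X n ⟶ Y) :
    f ∈ lcx_C P Y n ↔ P.complex.d (n+1) n ≫ f = 0 := Iff.rfl

lemma lcx_extMk0 {S : Type} [CommRing S] {X : ModuleCat.{0} S} (P : ProjectiveResolution X)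
    (Y : ModuleCat.{0} S) (f : P.complex.X 0 ⟶ Y) (hf : P.complex.d (0+1) 0 ≫ f = 0) :
    P.extMk f (0+1) rfl hf = 0 ↔ f = 0 := by
  constructor
  · intro h
    rw [← P.extEquivCohomologyClass.apply_eq_iff_eq,
      ProjectiveResolution.extEquivCohomologyClass_extMk,
      ProjectiveResolution.extEquivCohomologyClass_zero,
      CochainComplex.HomComplex.CohomologyClass.mk_eq_zero_iff,
      CochainComplex.HomComplex.Cocycle.toSingleMk_mem_coboundaries_iff _ _ _ _ _ 1 (by simp)] at h
    obtain ⟨g, hg⟩ := h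
    have hz : P.cochainComplex.d (-(0:ℕ)) 1 = 0 := by
      have : Limits.IsZero (P.cochainComplex.X 1) := P.cochainComplex.isZero_of_isStrictlyLE 0 1
      exact this.eq_of_tgt _ _
    rw [hz, Limits.zero_comp] at hg
    rw [← cancel_epi (P.cochainComplexXIso (-(0:ℕ)) 0 rfl).hom, ← hg, Limits.comp_zero]
  · rintro rfl
    simp

/-- old Ext module -/
abbrev lcx_old {S : Type} [CommRing S] (X Y : ModuleCat.{0} S) (n : ℕ) : ModuleCat.{0} S :=
  ((Ext S (ModuleCat.{0} S) n).obj (op X)).obj Y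

/-- cocycles to old Ext -/
def lcx_zO {S : Type} [CommRing S] {X : ModuleCat.{0} S} (P : ProjectiveResolution X)
    (Y : ModuleCat.{0} S) (n : ℕ) : lcx_C P Y n →ₗ[S] lcx_old X Y n :=
  ((lcx_zmap (lcx_K P Y) n) ≫ (P.isoLeftDerivedObj (lcx_F Y) n).hom.unop).hom

/-- cocycles to new Ext -/
def lcx_zE {S : Type} [CommRing S] {X : ModuleCat.{0} S} (P : ProjectiveResolution X)
    (Y : ModuleCat.{0} S) (n : ℕ) : lcx_C P Y n →ₗ[S] Abelian.Ext X Y n where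
  toFun f := P.extMk f.1 (n+1) rfl ((lcx_C_mem P Y n _).1 f.2)
  map_add' f g := (P.add_extMk f.1 g.1 (n+1) rfl ((lcx_C_mem P Y n _).1 f.2) ((lcx_C_mem P Y n _).1 g.2)).symm
  map_smul' r f := by
    rw [RingHom.id_apply, Abelian.Ext.smul_eq_comp_mk₀, P.extMk_comp_mk₀]
    congr 1

lemma lcx_zO_surj {S : Type} [CommRing S] {X : ModuleCat.{0} S} (P : ProjectiveResolution X)
    (Y : ModuleCat.{0} S) (n : ℕ) : Function.Surjective (lcx_zO P Y n) := by
  have h1 := lcx_zmap_surj (lcx_K P Y) n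
  intro x
  obtain ⟨z, hz⟩ := h1 ((P.isoLeftDerivedObj (lcx_F Y) n).inv.unop.hom x)
  refine ⟨z, ?_⟩
  show (P.isoLeftDerivedObj (lcx_F Y) n).hom.unop.hom ((lcx_zmap (lcx_K P Y) n).hom z) = x
  rw [hz]
  show ((P.isoLeftDerivedObj (lcx_F Y) n).hom ≫ (P.isoLeftDerivedObj (lcx_F Y) n).inv).unop.hom x = x
  rw [Iso.hom_inv_id]
  rfl

lemma lcx_zO_ker {S : Type} [CommRing S] {X : ModuleCat.{0} S} (P : ProjectiveResolution X)
    (Y : ModuleCat.{0} S) (n j : ℕ) (hj : (ComplexShape.down ℕ).next n = j) (z : lcx_C P Y n) :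
    lcx_zO P Y n z = 0 ↔ ∃ y : P.complex.X j ⟶ Y, P.complex.d n j ≫ y = z.1 := by
  have h1 := lcx_zmap_ker (lcx_K P Y) n j hj z
  refine Iff.trans ?_ h1
  show (P.isoLeftDerivedObj (lcx_F Y) n).hom.unop.hom ((lcx_zmap (lcx_K P Y) n).hom z) = 0 ↔ _
  constructor
  · intro h
    have h2 := congrArg (P.isoLeftDerivedObj (lcx_F Y) n).inv.unop.hom h
    refine Eq.trans ?_ (h2.trans (map_zero _))
    show _ = ((P.isoLeftDerivedObj (lcx_F Y) n).inv ≫ (P.isoLeftDerivedObj (lcx_F Y) n).hom).unop.hom _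
    rw [Iso.inv_hom_id]
    rfl
  · intro h
    exact (congrArg (P.isoLeftDerivedObj (lcx_F Y) n).hom.unop.hom h).trans (map_zero _)

lemma lcx_zE_surj {S : Type} [CommRing S] {X : ModuleCat.{0} S} (P : ProjectiveResolution X)
    (Y : ModuleCat.{0} S) (n : ℕ) : Function.Surjective (lcx_zE P Y n) := by
  intro x
  obtain ⟨f, hf, h⟩ := P.extMk_surjective x (n+1) rfl
  exact ⟨⟨f, hf⟩, h⟩

lemma lcx_zE_ker {S : Type} [CommRing S] {X : ModuleCat.{0} S} (P : ProjectiveResolution X)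
    (Y : ModuleCat.{0} S) (n j : ℕ) (hj : (ComplexShape.down ℕ).next n = j) (z : lcx_C P Y n) :
    lcx_zE P Y n z = 0 ↔ ∃ y : P.complex.X j ⟶ Y, P.complex.d n j ≫ y = z.1 := by
  show P.extMk z.1 (n+1) rfl z.2 = 0 ↔ _
  cases n with
  | succ p =>
    have : j = p := by rw [← hj]; simp
    subst this
    exact P.extMk_eq_zero_iff z.1 _ rfl z.2 j rfl
  | zero =>
    have hd : P.complex.d 0 j = 0 := P.complex.shape _ _ (by simp)
    rw [hd]
    refine (lcx_extMk0 P Y z.1 _).trans ?_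
    simp only [Limits.zero_comp, exists_const]
    exact eq_comm

lemma lcx_ker_eq {S : Type} [CommRing S] {X : ModuleCat.{0} S} (P : ProjectiveResolution X)
    (Y : ModuleCat.{0} S) (n : ℕ) : LinearMap.ker (lcx_zE P Y n) = LinearMap.ker (lcx_zO P Y n) := by
  ext z
  rw [LinearMap.mem_ker, LinearMap.mem_ker, lcx_zE_ker P Y n _ rfl, lcx_zO_ker P Y n _ rfl]

/-- comparison -/
def lcx_cmp {S : Type} [CommRing S] (X Y : ModuleCat.{0} S) (n : ℕ) :
    Abelian.Ext X Y n ≃ₗ[S] lcx_old X Y n :=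
  ((lcx_zE (projectiveResolution X) Y n).quotKerEquivOfSurjective (lcx_zE_surj _ Y n)).symm.trans
    ((Submodule.quotEquivOfEq _ _ (lcx_ker_eq _ Y n)).trans
      ((lcx_zO (projectiveResolution X) Y n).quotKerEquivOfSurjective (lcx_zO_surj _ Y n)))

lemma lcx_cmp_zE {S : Type} [CommRing S] (X Y : ModuleCat.{0} S) (n : ℕ)
    (z : lcx_C (projectiveResolution X) Y n) :
    lcx_cmp X Y n (lcx_zE _ Y n z) = lcx_zO _ Y n z := by
  have : ((lcx_zE (projectiveResolution X) Y n).quotKerEquivOfSurjective (lcx_zE_surj _ Y n)).symm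
      (lcx_zE _ Y n z) = Submodule.Quotient.mk z := by
    rw [LinearEquiv.symm_apply_eq]
    rfl
  simp only [lcx_cmp, LinearEquiv.trans_apply, this]
  rfl

lemma lcx_cmp_nat {S : Type} [CommRing S] {X X' : ModuleCat.{0} S} (f : X' ⟶ X) (Y : ModuleCat.{0} S)
    (n : ℕ) (x : Abelian.Ext X Y n) :
    lcx_cmp X' Y n ((Abelian.Ext.mk₀ f).comp x (zero_add n)) =
      (((Ext S (ModuleCat.{0} S) n).map f.op).app Y).hom (lcx_cmp X Y n x) := by
  obtain ⟨z, rfl⟩ := lcx_zE_surj (projectiveResolution X) Y n x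
  rw [lcx_cmp_zE]
  let φ : ProjectiveResolution.Hom (projectiveResolution X') (projectiveResolution X) f :=
    ⟨ProjectiveResolution.lift f _ _, ProjectiveResolution.lift_commutes_zero f _ _⟩
  let z' : lcx_C (projectiveResolution X') Y n := ⟨φ.hom.f n ≫ z.1, by
    have := (lcx_C_mem _ _ _ _).1 z.2
    rw [lcx_C_mem, ← φ.hom.comm_assoc, this, Limits.comp_zero]⟩
  have h1 : (Abelian.Ext.mk₀ f).comp (lcx_zE (projectiveResolution X) Y n z) (zero_add n) =
      lcx_zE (projectiveResolution X') Y n z' :=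
    ProjectiveResolution.mk₀_comp_extMk z.1 (n+1) rfl z.2 φ
  rw [h1, lcx_cmp_zE]
  have h2 := ProjectiveResolution.isoLeftDerivedObj_hom_naturality f (projectiveResolution X')
    (projectiveResolution X) φ.hom (by simpa using φ.hom_f_zero_comp_π_f_zero) (lcx_F Y) n
  have h3 := lcx_zmap_nat n (((lcx_F Y).mapHomologicalComplex (ComplexShape.down ℕ)).map φ.hom) z z' rfl
  show ((projectiveResolution X').isoLeftDerivedObj (lcx_F Y) n).hom.unop.hom
      ((lcx_zmap (lcx_K (projectiveResolution X') Y) n).hom z') =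
    (((lcx_F Y).leftDerived n).map f ≫
      ((projectiveResolution X).isoLeftDerivedObj (lcx_F Y) n).hom).unop.hom
      ((lcx_zmap (lcx_K (projectiveResolution X) Y) n).hom z)
  rw [h2, ← h3]
  rfl

end

noncomputable section

/-- factor map -/
def lcx_fac {S : Type} [CommRing S] {J J' : Ideal S} (h : J ≤ J') :
    ModuleCat.of S (S ⧸ J) ⟶ ModuleCat.of S (S ⧸ J') :=
  ModuleCat.ofHom (Submodule.mapQ _ _ LinearMap.id h)

/-- transition maps -/
def lcx_tr {S : Type} [CommRing S] {J J' : Ideal S} (h : J ≤ J') (Y : ModuleCat.{0} S) (i : ℕ) :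
    Abelian.Ext (ModuleCat.of S (S ⧸ J')) Y i →ₗ[S] Abelian.Ext (ModuleCat.of S (S ⧸ J)) Y i where
  toFun x := (Abelian.Ext.mk₀ (lcx_fac h)).comp x (zero_add i)
  map_add' x y := by simp
  map_smul' r x := by simp

lemma lcx_tr_tr {S : Type} [CommRing S] {J J' J'' : Ideal S} (h : J ≤ J') (h' : J' ≤ J'')
    (Y : ModuleCat.{0} S) (i : ℕ) (x) :
    lcx_tr h Y i (lcx_tr h' Y i x) = lcx_tr (h.trans h') Y i x := by
  show (Abelian.Ext.mk₀ (lcx_fac h)).comp ((Abelian.Ext.mk₀ (lcx_fac h')).comp x (zero_add i)) (zero_add i) =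
    (Abelian.Ext.mk₀ (lcx_fac (h.trans h'))).comp x (zero_add i)
  rw [Abelian.Ext.mk₀_comp_mk₀_assoc]
  congr 2
  ext x
  simp [lcx_fac]

lemma lcx_powers {S : Type} [CommRing S] (I : Ideal S) (i : ℕ) :
    ∃ l : ∀ k : ℕ, Abelian.Ext (ModuleCat.of S (S ⧸ I ^ k)) (ModuleCat.of S S) i →ₗ[S]
        LocalCohomologyMod S I i,
      (∀ k k' (h : k ≤ k') x, l k' (lcx_tr (Ideal.pow_le_pow_right h) _ i x) = l k x) ∧
      (∀ x, ∃ k y, l k y = x) ∧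
      (∀ k x, l k x = 0 → ∃ k', ∃ h : k ≤ k', lcx_tr (Ideal.pow_le_pow_right h) _ i x = 0) := by
  let Y := ModuleCat.of S S
  let D := localCohomology.diagram (localCohomology.idealPowersDiagram I) i
  have : Limits.HasColimit D := localCohomology.hasColimitDiagram.{0,0} _ i
  let ev := (evaluation (ModuleCat.{0} S) (ModuleCat.{0} S)).obj Y
  let c : Limits.Cocone (D ⋙ ev) := ev.mapCocone (Limits.colimit.cocone D)
  have hc : Limits.IsColimit c := Limits.isColimitOfPreserves ev (Limits.colimit.isColimit D)
  have hcpt : c.pt = (localCohomology I i).obj Y := rfl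
  let l0 : ∀ k : ℕ, lcx_old (ModuleCat.of S (S ⧸ I ^ k)) Y i ⟶ (localCohomology I i).obj Y :=
    fun k => c.ι.app (op (op k))
  have hcmp : ∀ k k' (h : k ≤ k') x, lcx_cmp _ Y i (lcx_tr (Ideal.pow_le_pow_right h) Y i x) =
      ((D ⋙ ev).map (homOfLE h).op.op).hom (lcx_cmp (ModuleCat.of S (S ⧸ I ^ k)) Y i x) :=
    fun k k' h x => lcx_cmp_nat _ Y i x
  refine ⟨fun k => (l0 k).hom.comp (lcx_cmp _ Y i).toLinearMap, ?_, ?_, ?_⟩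
  · intro k k' h x
    show (l0 k').hom (lcx_cmp _ Y i (lcx_tr (Ideal.pow_le_pow_right h) _ i x)) =
      (l0 k).hom (lcx_cmp _ Y i x)
    rw [hcmp]
    have := c.w (homOfLE h).op.op
    exact congrArg (fun f => f.hom (lcx_cmp (ModuleCat.of S (S ⧸ I ^ k)) Y i x)) this
  · intro x
    obtain ⟨j, y, hy⟩ := Limits.Concrete.isColimit_exists_rep (D ⋙ ev) hc x
    refine ⟨j.unop.unop, (lcx_cmp (ModuleCat.of S (S ⧸ I ^ (j.unop.unop))) Y i).symm y, ?_⟩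
    exact (congrArg (l0 j.unop.unop).hom
      ((lcx_cmp (ModuleCat.of S (S ⧸ I ^ (j.unop.unop))) Y i).apply_symm_apply y)).trans hy
  · intro k x hx
    have hx' : c.ι.app (op (op k)) (lcx_cmp (ModuleCat.of S (S ⧸ I ^ k)) Y i x) =
      c.ι.app (op (op k)) (lcx_cmp (ModuleCat.of S (S ⧸ I ^ k)) Y i 0) := by
      rw [map_zero]
      exact hx.trans (map_zero _).symm
    obtain ⟨j, f, f', hf⟩ := Limits.Concrete.isColimit_exists_of_rep_eq (D ⋙ ev) hc _ _ hx'
    refine ⟨j.unop.unop, leOfHom f.unop.unop, (lcx_cmp _ Y i).injective ?_⟩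
    rw [hcmp, map_zero]
    refine hf.trans ?_
    rw [map_zero]
    exact map_zero _

lemma lcx_interface {S : Type} [CommRing S] [IsNoetherianRing S] (I : Ideal S) (i : ℕ)
    (J : ℕ → Ideal S) (hJ : Antitone J) (hrad : ∀ t, I ≤ (J t).radical)
    (hcof : ∀ k, ∃ t, J t ≤ I ^ k) :
    ∃ l : ∀ t : ℕ, Abelian.Ext (ModuleCat.of S (S ⧸ J t)) (ModuleCat.of S S) i →ₗ[S]
        LocalCohomologyMod S I i,
      (∀ k k' (h : k ≤ k') x, l k' (lcx_tr (hJ h) _ i x) = l k x) ∧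
      (∀ x, ∃ k y, l k y = x) ∧
      (∀ k x, l k x = 0 → ∃ k', ∃ h : k ≤ k', lcx_tr (hJ h) _ i x = 0) := by
  obtain ⟨l, h1, h2, h3⟩ := lcx_powers I i
  have hk : ∀ t, ∃ k, I ^ k ≤ J t := fun t =>
    Ideal.exists_pow_le_of_le_radical_of_fg (hrad t) (IsNoetherian.noetherian I)
  choose k hk using hk
  have key : ∀ (K : Ideal S) (a b : ℕ) (ha : I ^ a ≤ K) (hb : I ^ b ≤ K) x,
      l a (lcx_tr ha _ i x) = l b (lcx_tr hb _ i x) := by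
    intro K a b ha hb x
    rw [← h1 a (max a b) (le_max_left _ _), ← h1 b (max a b) (le_max_right _ _), lcx_tr_tr, lcx_tr_tr]
  have hid : ∀ a x, lcx_tr (le_refl (I ^ a)) (ModuleCat.of S S) i x = x := by
    intro a x
    have : lcx_fac (le_refl (I ^ a)) = 𝟙 _ := by
      ext; simp [lcx_fac]
    show (Abelian.Ext.mk₀ (lcx_fac (le_refl (I ^ a)))).comp x (zero_add i) = x
    rw [this, Abelian.Ext.mk₀_id_comp]
  refine ⟨fun t => (l (k t)).comp (lcx_tr (hk t) _ i), ?_, ?_, ?_⟩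
  · intro t t' h x
    simp only [LinearMap.comp_apply]
    rw [lcx_tr_tr]
    exact key _ _ _ _ _ x
  · intro x
    obtain ⟨a, y, rfl⟩ := h2 x
    obtain ⟨t, ht⟩ := hcof a
    refine ⟨t, lcx_tr ht _ i y, ?_⟩
    simp only [LinearMap.comp_apply]
    rw [lcx_tr_tr, key _ (k t) a _ le_rfl, hid]
  · intro t x hx
    simp only [LinearMap.comp_apply] at hx
    obtain ⟨k', h, h0⟩ := h3 _ _ hx
    rw [lcx_tr_tr] at h0
    obtain ⟨u, hu⟩ := hcof k'
    have hu' : J (max t u) ≤ I ^ k' := (hJ (le_max_right _ _)).trans hu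
    refine ⟨max t u, le_max_left _ _, ?_⟩
    rw [← lcx_tr_tr hu' ((Ideal.pow_le_pow_right h).trans (hk t)), h0, map_zero]

end

lemma lcx_supp {S : Type} [CommRing S] [IsLocalRing S] (J : Ideal S)
    (h : IsLocalRing.maximalIdeal S ≤ J.radical) :
    Module.support S (S ⧸ J) ⊆ PrimeSpectrum.zeroLocus (IsLocalRing.maximalIdeal S) := by
  intro p hp
  have : J ≤ p.asIdeal := by
    have h2 := Module.annihilator_le_of_mem_support hp
    rwa [Ideal.annihilator_quotient] at h2
  exact h.trans ((Ideal.radical_mono this).trans p.2.radical.le)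

lemma lcx_low {S : Type} [CommRing S] [IsLocalRing S] [IsNoetherianRing S] (rs : List S)
    (hrs : Ideal.ofList rs = IsLocalRing.maximalIdeal S)
    (hreg : RingTheory.Sequence.IsWeaklyRegular S rs) (J : Ideal S)
    (h : IsLocalRing.maximalIdeal S ≤ J.radical) (i : ℕ) (hi : i < rs.length) :
    Subsingleton (Abelian.Ext (ModuleCat.of S (S ⧸ J)) (ModuleCat.of S S) i) := by
  have hlt : IsLocalRing.maximalIdeal S • (⊤ : Submodule S S) < ⊤ := by
    rw [Ideal.smul_eq_mul, Ideal.mul_top]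
    exact lt_top_iff_ne_top.mpr (IsLocalRing.maximalIdeal.isMaximal S).ne_top
  refine ModuleCat.subsingleton_ext_of_exists_isRegular (IsLocalRing.maximalIdeal S)
    (ModuleCat.of S (S ⧸ J)) (lcx_supp J h) (ModuleCat.of S S) hlt rs ?_ ⟨hreg, ?_⟩ i hi
  · intro r hr
    rw [← hrs]
    exact Ideal.subset_span hr
  · rw [hrs]; exact hlt.ne'

lemma lcx_high {S : Type} [CommRing S] [IsLocalRing S] [IsNoetherianRing S] (rs : List S)
    (hrs : Ideal.ofList rs = IsLocalRing.maximalIdeal S)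
    (hreg : RingTheory.Sequence.IsWeaklyRegular S rs) (M : Type) [AddCommGroup M] [Module S M]
    (hM : Module.Finite S M)
    (h : Module.support S M ⊆ PrimeSpectrum.zeroLocus (IsLocalRing.maximalIdeal S)) :
    HasProjectiveDimensionLT (ModuleCat.of S M) (rs.length + 1) := by
  have hk : HasProjectiveDimensionLT (ModuleCat.of S (S ⧸ IsLocalRing.maximalIdeal S))
      (rs.length + 1) := by
    have h1 := ModuleCat.projectiveDimension_quotient_eq_add_length_of_isWeaklyRegular
      (ModuleCat.of S S) rs hreg (by intro r hr; rw [← hrs]; exact Ideal.subset_span hr)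
    have h0 := ModuleCat.projectiveDimension_eq_zero_of_projective (ModuleCat.of S S)
    rw [h0, zero_add] at h1
    have h2 := projectiveDimension_lt_iff.1 (h1.le.trans_lt (by exact_mod_cast Nat.lt_succ_self _) :
      _ < ((rs.length + 1 : ℕ) : WithBot ℕ∞))
    have e : (S ⧸ Ideal.ofList rs • (⊤ : Submodule S S)) ≃ₗ[S] (S ⧸ IsLocalRing.maximalIdeal S) :=
      Submodule.quotEquivOfEq _ _ (by rw [hrs, Ideal.smul_eq_mul, Ideal.mul_top])
    exact hasProjectiveDimensionLT_of_iso e.toModuleIso _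
  revert h
  induction hM using IsNoetherianRing.induction_on_isQuotientEquivQuotientPrime S with
  | subsingleton N =>
    intro _
    have : Limits.IsZero (ModuleCat.of S N) := ModuleCat.isZero_of_subsingleton _
    have := this.hasProjectiveDimensionLT_zero
    exact hasProjectiveDimensionLT_of_ge _ 0 _ (Nat.zero_le _)
  | quotient N p f =>
    intro h
    have hp : p.1 = IsLocalRing.maximalIdeal S := by
      have h1 : p ∈ Module.support S N := by
        rw [LinearEquiv.support_eq f, Module.support_eq_zeroLocus, Ideal.annihilator_quotient]
        exact le_refl p.1
      exact le_antisymm (IsLocalRing.le_maximalIdeal p.2.ne_top) (h h1)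
    rw [hp] at f
    exact hasProjectiveDimensionLT_of_iso f.symm.toModuleIso _
  | exact N₁ N₂ N₃ f g hf hg hfg h₁ h₃ =>
    intro h
    have a₁ := h₁ ((Module.support_subset_of_injective f hf).trans h)
    have a₃ := h₃ ((Module.support_subset_of_surjective g hg).trans h)
    let sc := ModuleCat.shortComplexOfCompEqZero f g hfg.linearMap_comp_eq_zero
    have hsc : sc.ShortExact :=
      { exact := ModuleCat.shortComplex_exact _ hfg
        mono_f := (ModuleCat.mono_iff_injective _).2 hf
        epi_g := (ModuleCat.epi_iff_surjective _).2 hg }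
    exact hsc.hasProjectiveDimensionLT_X₂ _ a₁ a₃

noncomputable section

/-- short complex -/
def lcx_sc {S : Type} [CommRing S] (Q : Ideal S) (c : S) : ShortComplex (ModuleCat.{0} S) :=
  ShortComplex.mk (c • 𝟙 (ModuleCat.of S (S ⧸ Q)))
    (lcx_fac (le_sup_left : Q ≤ Q ⊔ Ideal.span {c})) (by
      ext
      simp only [lcx_fac]
      show Ideal.Quotient.mk (Q ⊔ Ideal.span {c}) (c * 1) = 0
      rw [Ideal.Quotient.eq_zero_iff_mem, mul_one]
      exact Ideal.mem_sup_right (Ideal.mem_span_singleton_self c))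

lemma lcx_sc_exact {S : Type} [CommRing S] (Q : Ideal S) (c : S) (hc : ∀ x, c * x ∈ Q → x ∈ Q) :
    (lcx_sc Q c).ShortExact where
  exact := by
    rw [ShortComplex.moduleCat_exact_iff]
    intro x hx
    obtain ⟨x, rfl⟩ := Ideal.Quotient.mk_surjective (I := Q) x
    have hx' : Ideal.Quotient.mk (Q ⊔ Ideal.span {c}) x = 0 := hx
    rw [Ideal.Quotient.eq_zero_iff_mem, Submodule.mem_sup] at hx'
    obtain ⟨y, hy, z, hz, rfl⟩ := hx'
    obtain ⟨w, rfl⟩ := Ideal.mem_span_singleton'.1 hz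
    refine ⟨Ideal.Quotient.mk Q w, ?_⟩
    show Ideal.Quotient.mk Q (c * w) = Ideal.Quotient.mk Q (y + w * c)
    rw [Ideal.Quotient.eq]
    have : c * w - (y + w * c) = - y := by ring
    rw [this]; exact neg_mem hy
  mono_f := by
    rw [ModuleCat.mono_iff_injective]
    refine (injective_iff_map_eq_zero _).2 ?_
    intro x hx
    obtain ⟨x, rfl⟩ := Ideal.Quotient.mk_surjective (I := Q) x
    have hx' : Ideal.Quotient.mk Q (c * x) = 0 := hx
    rw [Ideal.Quotient.eq_zero_iff_mem] at hx'
    exact Ideal.Quotient.eq_zero_iff_mem.2 (hc x hx')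
  epi_g := by
    rw [ModuleCat.epi_iff_surjective]
    intro x
    obtain ⟨x, rfl⟩ := Ideal.Quotient.mk_surjective (I := Q ⊔ Ideal.span {c}) x
    exact ⟨Ideal.Quotient.mk Q x, rfl⟩

lemma lcx_fac_comp {S : Type} [CommRing S] {J J' J'' : Ideal S} (h : J ≤ J') (h' : J' ≤ J'') :
    lcx_fac h ≫ lcx_fac h' = lcx_fac (h.trans h') := by
  ext
  simp [lcx_fac]

/-- morphism of short complexes -/
def lcx_scmap {S : Type} [CommRing S] {Q Q' : Ideal S} (h : Q' ≤ Q) (c c' d : S) (hc : c' = d * c)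
    (h' : Q' ⊔ Ideal.span {c'} ≤ Q ⊔ Ideal.span {c}) : lcx_sc Q' c' ⟶ lcx_sc Q c where
  τ₁ := d • lcx_fac h
  τ₂ := lcx_fac h
  τ₃ := lcx_fac h'
  comm₁₂ := by
    show (d • lcx_fac h) ≫ (c • 𝟙 (ModuleCat.of S (S ⧸ Q))) =
      (c' • 𝟙 (ModuleCat.of S (S ⧸ Q'))) ≫ lcx_fac h
    rw [Linear.smul_comp, Linear.comp_smul, Linear.smul_comp, Category.comp_id, Category.id_comp,
      ← mul_smul, hc]
  comm₂₃ := by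
    show lcx_fac h ≫ lcx_fac _ = lcx_fac _ ≫ lcx_fac h'
    rw [lcx_fac_comp, lcx_fac_comp]

/-- connecting map -/
def lcx_del {S : Type} [CommRing S] (Q : Ideal S) (c : S) (hc : ∀ x, c * x ∈ Q → x ∈ Q)
    (Y : ModuleCat.{0} S) (i j : ℕ) (hij : 1 + i = j) :
    Abelian.Ext (ModuleCat.of S (S ⧸ Q)) Y i →ₗ[S]
      Abelian.Ext (ModuleCat.of S (S ⧸ (Q ⊔ Ideal.span {c}))) Y j where
  toFun x := (lcx_sc_exact Q c hc).extClass.comp (Y := ModuleCat.of S (S ⧸ Q)) x hij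
  map_add' x y := Abelian.Ext.comp_add ..
  map_smul' r x := Abelian.Ext.comp_smul ..

lemma lcx_smul_eq {S : Type} [CommRing S] (X Y : ModuleCat.{0} S) (c : S) (i : ℕ)
    (x : Abelian.Ext X Y i) :
    (Abelian.Ext.mk₀ (c • 𝟙 X)).comp x (zero_add i) = c • x := by
  rw [Abelian.Ext.mk₀_smul, Abelian.Ext.smul_comp, Abelian.Ext.mk₀_id_comp]

lemma lcx_del_smul {S : Type} [CommRing S] (Q : Ideal S) (c : S) (hc : ∀ x, c * x ∈ Q → x ∈ Q)
    (Y : ModuleCat.{0} S) (i j : ℕ) (hij : 1 + i = j) (x) :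
    lcx_del Q c hc Y i j hij (c • x) = 0 := by
  rw [← lcx_smul_eq]
  exact (lcx_sc_exact Q c hc).extClass_comp_assoc x (h := hij)

lemma lcx_del_ker {S : Type} [CommRing S] (Q : Ideal S) (c : S) (hc : ∀ x, c * x ∈ Q → x ∈ Q)
    (Y : ModuleCat.{0} S) (i j : ℕ) (hij : 1 + i = j) (x) (hx : lcx_del Q c hc Y i j hij x = 0) :
    ∃ y, x = c • y := by
  obtain ⟨y, hy⟩ := Abelian.Ext.contravariant_sequence_exact₁ (lcx_sc_exact Q c hc) Y x hij hx
  exact ⟨y, hy.symm.trans (lcx_smul_eq (ModuleCat.of S (S ⧸ Q)) Y c i y)⟩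

lemma lcx_mul_inj {S : Type} [CommRing S] (Q : Ideal S) (c : S) (hc : ∀ x, c * x ∈ Q → x ∈ Q)
    (Y : ModuleCat.{0} S) (i : ℕ)
    (hs : Subsingleton (Abelian.Ext (ModuleCat.of S (S ⧸ (Q ⊔ Ideal.span {c}))) Y i))
    (x : Abelian.Ext (ModuleCat.of S (S ⧸ Q)) Y i) (hx : c • x = 0) : x = 0 := by
  rw [← lcx_smul_eq] at hx
  obtain ⟨y, hy⟩ := Abelian.Ext.contravariant_sequence_exact₂ (lcx_sc_exact Q c hc) Y x hx
  have : y = 0 := hs.elim _ _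
  rw [← hy, this]
  exact Abelian.Ext.comp_zero ..

lemma lcx_top_zero {S : Type} [CommRing S] [IsLocalRing S] [IsNoetherianRing S]
    (Q : Ideal S) (c : S) (hc : ∀ x, c * x ∈ Q → x ∈ Q) (hcm : c ∈ IsLocalRing.maximalIdeal S)
    (j : ℕ)
    (hs : Subsingleton (Abelian.Ext (ModuleCat.of S (S ⧸ (Q ⊔ Ideal.span {c})))
      (ModuleCat.of S S) (j+1))) :
    Subsingleton (Abelian.Ext (ModuleCat.of S (S ⧸ Q)) (ModuleCat.of S S) j) := by
  have hfin : Module.Finite S (Abelian.Ext (ModuleCat.of S (S ⧸ Q)) (ModuleCat.of S S) j) :=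
    ModuleCat.finite_ext ..
  have h1 : ∀ x : Abelian.Ext (ModuleCat.of S (S ⧸ Q)) (ModuleCat.of S S) j, ∃ y, x = c • y :=
    fun x => lcx_del_ker Q c hc _ j (j+1) (add_comm _ _) x (hs.elim _ _)
  have h2 : (⊤ : Submodule S (Abelian.Ext (ModuleCat.of S (S ⧸ Q)) (ModuleCat.of S S) j)) = ⊥ := by
    refine Submodule.eq_bot_of_le_smul_of_le_jacobson_bot (IsLocalRing.maximalIdeal S) ⊤
      hfin.fg_top ?_ (IsLocalRing.maximalIdeal_le_jacobson _)
    intro x _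
    obtain ⟨y, rfl⟩ := h1 x
    exact Submodule.smul_mem_smul hcm trivial
  exact (Submodule.subsingleton_iff S).1 (subsingleton_iff_bot_eq_top.1 h2.symm)

lemma lcx_del_surj {S : Type} [CommRing S] (Q : Ideal S) (c : S) (hc : ∀ x, c * x ∈ Q → x ∈ Q)
    (Y : ModuleCat.{0} S) (i j : ℕ) (hij : 1 + i = j)
    (hs : Subsingleton (Abelian.Ext (ModuleCat.of S (S ⧸ Q)) Y j)) :
    Function.Surjective (lcx_del Q c hc Y i j hij) := by
  intro x
  exact Abelian.Ext.contravariant_sequence_exact₃ (lcx_sc_exact Q c hc) Y x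
    (by exact hs.elim _ _) hij

lemma lcx_del_nat {S : Type} [CommRing S] {Q Q' : Ideal S} (h : Q' ≤ Q) (c c' d : S)
    (hcc : c' = d * c)
    (h' : Q' ⊔ Ideal.span {c'} ≤ Q ⊔ Ideal.span {c})
    (hc : ∀ x, c * x ∈ Q → x ∈ Q) (hc' : ∀ x, c' * x ∈ Q' → x ∈ Q')
    (Y : ModuleCat.{0} S) (i j : ℕ) (hij : 1 + i = j) (x) :
    lcx_tr h' Y j (lcx_del Q c hc Y i j hij x) =
      lcx_del Q' c' hc' Y i j hij (d • lcx_tr h Y i x) := by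
  have hn := ShortComplex.ShortExact.extClass_naturality (lcx_sc_exact Q' c' hc')
    (lcx_sc_exact Q c hc) (lcx_scmap h c c' d hcc h')
  have h1 : (Abelian.Ext.mk₀ (d • lcx_fac h)).comp x (zero_add i) = d • lcx_tr h Y i x := by
    rw [Abelian.Ext.mk₀_smul, Abelian.Ext.smul_comp]
    rfl
  rw [← h1]
  have h2 := congrArg (fun z => Abelian.Ext.comp z x hij) hn
  refine Eq.trans ?_ (h2.symm.trans ?_)
  · exact (Abelian.Ext.comp_assoc _ _ _ (zero_add 1) hij (by omega)).symm
  · exact (Abelian.Ext.comp_assoc _ _ _ (add_zero 1) (zero_add i) (by omega))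

end

lemma lcx_assemble {S : Type} [CommRing S] (g : S) (E D : ℕ → Type)
    [∀ t, AddCommGroup (E t)] [∀ t, Module S (E t)] [∀ t, AddCommGroup (D t)] [∀ t, Module S (D t)]
    (a : ∀ t t' : ℕ, t ≤ t' → (E t →ₗ[S] E t')) (b : ∀ t t' : ℕ, t ≤ t' → (D t →ₗ[S] D t'))
    (haa : ∀ t u v (h1 : t ≤ u) (h2 : u ≤ v) x, a u v h2 (a t u h1 x) = a t v (h1.trans h2) x)
    (δ : ∀ t, E t →ₗ[S] D t) (hδs : ∀ t, Function.Surjective (δ t))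
    (hδ1 : ∀ t y, δ t (g ^ t • y) = 0) (hδ2 : ∀ t x, δ t x = 0 → ∃ y, x = g ^ t • y)
    (hginj : ∀ t (y : E t), g ^ t • y = 0 → y = 0)
    (hba : ∀ t t' (h : t ≤ t') x, b t t' h (δ t x) = δ t' (g ^ (t' - t) • a t t' h x))
    (H H' : Type) [AddCommGroup H] [Module S H] [AddCommGroup H'] [Module S H']
    (ι : ∀ t, E t →ₗ[S] H) (ι' : ∀ t, D t →ₗ[S] H')
    (hι : ∀ t t' (h : t ≤ t') x, ι t' (a t t' h x) = ι t x)
    (hι' : ∀ t t' (h : t ≤ t') x, ι' t' (b t t' h x) = ι' t x)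
    (hιs : ∀ x, ∃ t y, ι t y = x) (hιs' : ∀ x, ∃ t y, ι' t y = x)
    (hιk : ∀ t x, ι t x = 0 → ∃ t', ∃ h : t ≤ t', a t t' h x = 0)
    (hιk' : ∀ t x, ι' t x = 0 → ∃ t', ∃ h : t ≤ t', b t t' h x = 0) :
    Function.Injective (LocalizedModule.mkLinearMap (Submonoid.powers g) H) ∧
      ∃ π : LocalizedModule (Submonoid.powers g) H →ₗ[S] H', Function.Surjective π ∧
        LinearMap.ker π = LinearMap.range (LocalizedModule.mkLinearMap (Submonoid.powers g) H) := by
  classical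
  have htf1 : ∀ x : H, g • x = 0 → x = 0 := by
    intro x hx
    obtain ⟨t, y, rfl⟩ := hιs x
    rw [← map_smul] at hx
    obtain ⟨t', h, h0⟩ := hιk t _ hx
    rw [map_smul] at h0
    have h1 : a t (t'+1) (h.trans (Nat.le_succ _)) y = 0 := by
      refine hginj (t'+1) _ ?_
      rw [← haa t t' (t'+1) h (Nat.le_succ _), pow_succ, mul_smul, ← map_smul, h0]
      simp
    rw [← hι t (t'+1) (h.trans (Nat.le_succ _)), h1, map_zero]
  have htf : ∀ (k : ℕ) (x : H), g ^ k • x = 0 → x = 0 := by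
    intro k
    induction k with
    | zero => intro x hx; simpa using hx
    | succ k ih =>
      intro x hx
      rw [pow_succ', mul_smul] at hx
      exact ih x (htf1 _ hx)
  have hmkeq : ∀ (x y : H) (s s' : Submonoid.powers g),
      LocalizedModule.mk x s = LocalizedModule.mk y s' ↔ s'.1 • x = s.1 • y := by
    intro x y s s'
    rw [LocalizedModule.mk_eq]
    constructor
    · rintro ⟨⟨u, k, rfl⟩, hu⟩
      rw [← sub_eq_zero, ← smul_sub] at hu
      exact sub_eq_zero.mp (htf k _ hu)
    · intro h
      exact ⟨1, by simpa [Submonoid.smul_def] using h⟩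
  let gp : ℕ → Submonoid.powers g := fun t => ⟨g ^ t, t, rfl⟩
  let φ : ∀ t, E t →ₗ[S] LocalizedModule (Submonoid.powers g) H := fun t =>
    (LocalizedModule.divBy (gp t)).comp
      ((LocalizedModule.mkLinearMap (Submonoid.powers g) H).comp (ι t))
  have hφ : ∀ t y, φ t y = LocalizedModule.mk (ι t y) (gp t) := by
    intro t y
    simp only [φ, LinearMap.comp_apply, LocalizedModule.mkLinearMap_apply,
      LocalizedModule.divBy_apply]
    rw [LocalizedModule.liftOn_mk, one_mul]
  have hφa : ∀ t t' (h : t ≤ t') y, φ t' (g ^ (t' - t) • a t t' h y) = φ t y := by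
    intro t t' h y
    rw [hφ, hφ, hmkeq, map_smul, hι]
    simp only [gp]
    rw [← mul_smul, ← pow_add]
    congr 2; omega
  let Q := LocalizedModule (Submonoid.powers g) H ⧸
    LinearMap.range (LocalizedModule.mkLinearMap (Submonoid.powers g) H)
  let q : LocalizedModule (Submonoid.powers g) H →ₗ[S] Q := Submodule.mkQ _
  have hq : ∀ z, q z = 0 ↔ ∃ x : H, z = LocalizedModule.mk x 1 := by
    intro z
    show Submodule.mkQ _ z = 0 ↔ _
    rw [Submodule.mkQ_apply, Submodule.Quotient.mk_eq_zero, LinearMap.mem_range]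
    exact ⟨fun ⟨x, h⟩ => ⟨x, h.symm⟩, fun ⟨x, h⟩ => ⟨x, h.symm⟩⟩
  let L := DirectSum ℕ E
  let A : L →ₗ[S] H' := DirectSum.toModule S ℕ H' (fun t => (ι' t).comp (δ t))
  let B : L →ₗ[S] Q := DirectSum.toModule S ℕ Q (fun t => q.comp (φ t))
  have hA : ∀ t y, A (DirectSum.lof S ℕ E t y) = ι' t (δ t y) := by
    intro t y; exact DirectSum.toModule_lof S t y
  have hB : ∀ t y, B (DirectSum.lof S ℕ E t y) = q (φ t y) := by
    intro t y; exact DirectSum.toModule_lof S t y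
  have hAa : ∀ t t' (h : t ≤ t') y, A (DirectSum.lof S ℕ E t' (g ^ (t' - t) • a t t' h y)) =
      A (DirectSum.lof S ℕ E t y) := by
    intro t t' h y
    rw [hA, hA, ← hba, hι']
  have hBa : ∀ t t' (h : t ≤ t') y, B (DirectSum.lof S ℕ E t' (g ^ (t' - t) • a t t' h y)) =
      B (DirectSum.lof S ℕ E t y) := by
    intro t t' h y
    rw [hB, hB, hφa]
  have hsingle : ∀ l : L, ∃ t y, A l = A (DirectSum.lof S ℕ E t y) ∧
      B l = B (DirectSum.lof S ℕ E t y) := by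
    intro l
    induction l using DirectSum.induction_on with
    | zero => exact ⟨0, 0, by simp, by simp⟩
    | of t y => exact ⟨t, y, rfl, rfl⟩
    | add l m hl hm =>
      obtain ⟨t, y, h1, h2⟩ := hl
      obtain ⟨s, z, h3, h4⟩ := hm
      refine ⟨max t s, g ^ (max t s - t) • a t _ (le_max_left _ _) y +
        g ^ (max t s - s) • a s _ (le_max_right _ _) z, ?_, ?_⟩
      · rw [map_add, map_add, map_add, hAa, hAa, h1, h3]
      · rw [map_add, map_add, map_add, hBa, hBa, h2, h4]
  have hker : LinearMap.ker A = LinearMap.ker B := by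
    ext l
    rw [LinearMap.mem_ker, LinearMap.mem_ker]
    obtain ⟨t, y, h1, h2⟩ := hsingle l
    rw [h1, h2, hA, hB, hq]
    constructor
    · intro h
      obtain ⟨t', htt, h0⟩ := hιk' t _ h
      rw [hba] at h0
      obtain ⟨z, hz⟩ := hδ2 _ _ h0
      refine ⟨ι t' z, ?_⟩
      rw [← hφa t t' htt, hz, hφ, hmkeq]
      simp [gp]
    · rintro ⟨x, hx⟩
      obtain ⟨s, z, rfl⟩ := hιs x
      rw [hφ, hmkeq] at hx
      simp only [gp, OneMemClass.coe_one, one_smul] at hx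
      have h3 : ι (max t s) (a t _ (le_max_left _ _) y - g ^ t • a s _ (le_max_right _ _) z) = 0 := by
        rw [map_sub, map_smul, hι, hι, hx, sub_self]
      obtain ⟨u, hu, h4⟩ := hιk _ _ h3
      rw [map_sub, map_smul, haa, haa, sub_eq_zero] at h4
      have htu : t ≤ u := (le_max_left _ _).trans hu
      rw [← hι' t u htu, hba, h4, ← mul_smul, ← pow_add, Nat.sub_add_cancel htu, hδ1, map_zero]
  have hAs : Function.Surjective A := by
    intro x
    obtain ⟨t, d, rfl⟩ := hιs' x
    obtain ⟨y, rfl⟩ := hδs t d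
    exact ⟨_, hA t y⟩
  have hBs : Function.Surjective B := by
    intro x
    obtain ⟨z, rfl⟩ := Submodule.mkQ_surjective _ x
    induction z using LocalizedModule.induction_on with
    | h x s =>
      obtain ⟨_, k, rfl⟩ := s
      obtain ⟨t, y, rfl⟩ := hιs x
      refine ⟨DirectSum.lof S ℕ E (max t k) (g ^ (max t k - k) • a t _ (le_max_left _ _) y), ?_⟩
      rw [hB]
      show q _ = q _
      congr 1
      rw [hφ, hmkeq, map_smul, hι]
      simp only [gp]
      rw [← mul_smul, ← pow_add]
      congr 2
      have := le_max_right t k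
      omega
  refine ⟨?_, ?_⟩
  · intro x y hxy
    simp only [LocalizedModule.mkLinearMap_apply, hmkeq] at hxy
    simpa using hxy
  · let e : Q ≃ₗ[S] H' := (B.quotKerEquivOfSurjective hBs).symm.trans
      ((Submodule.quotEquivOfEq _ _ hker.symm).trans (A.quotKerEquivOfSurjective hAs))
    refine ⟨e.toLinearMap.comp q, e.surjective.comp (Submodule.mkQ_surjective _), ?_⟩
    rw [LinearEquiv.ker_comp]
    exact Submodule.ker_mkQ _

lemma lcx_height {S : Type} [CommRing S] [IsLocalRing S]
    (e : ℕ) (he : 1 ≤ e) (hdim : ringKrullDim S = (e : WithBot ℕ∞))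
    (P : Ideal S) [P.IsPrime] (hP : idealHeight S P = ((e - 1 : ℕ) : ℕ∞)) :
    P ≠ IsLocalRing.maximalIdeal S ∧
      ∀ q : Ideal S, q.IsPrime → P ≤ q → q = P ∨ q = IsLocalRing.maximalIdeal S := by
  have hle : ∀ p : PrimeSpectrum S, Order.height p ≤ (e : ℕ∞) := by
    intro p
    have h1 := Order.height_le_krullDim p
    have h2 : ((Order.height p : ℕ∞) : WithBot ℕ∞) ≤ (e : WithBot ℕ∞) := hdim ▸ h1
    exact_mod_cast h2
  have hge : ∀ p : PrimeSpectrum S, P ≤ p.asIdeal → ((e - 1 : ℕ) : ℕ∞) ≤ Order.height p := by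
    intro p hp
    rw [← hP]
    exact sInf_le ⟨p, hp, rfl⟩
  constructor
  · intro hPm
    have h1 : (e : ℕ∞) ≤ idealHeight S P := by
      refine le_sInf ?_
      rintro h ⟨p, hp, rfl⟩
      have hpm : p.asIdeal = IsLocalRing.maximalIdeal S :=
        le_antisymm (IsLocalRing.le_maximalIdeal p.2.ne_top) (hPm ▸ hp)
      have h3 := IsLocalRing.maximalIdeal_height_eq_ringKrullDim (R := S)
      rw [hdim, ← hpm] at h3
      rw [PrimeSpectrum.height_eq_orderHeight] at h3
      have h4 : Order.height p = e := by exact_mod_cast h3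
      exact h4.symm.le
    rw [hP] at h1
    have : e ≤ e - 1 := by exact_mod_cast h1
    omega
  · intro q hq hPq
    by_contra! hcon
    let p₁ : PrimeSpectrum S := ⟨P, inferInstance⟩
    let p₂ : PrimeSpectrum S := ⟨q, hq⟩
    let p₃ : PrimeSpectrum S := ⟨IsLocalRing.maximalIdeal S, inferInstance⟩
    have h12 : p₁ < p₂ := lt_of_le_of_ne hPq (fun h => hcon.1 (congrArg PrimeSpectrum.asIdeal h).symm)
    have h23 : p₂ < p₃ := lt_of_le_of_ne (IsLocalRing.le_maximalIdeal hq.ne_top)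
      (fun h => hcon.2 (congrArg PrimeSpectrum.asIdeal h))
    have a1 := Order.height_add_one_le h12
    have a2 := Order.height_add_one_le h23
    have a3 := hle p₃
    have a0 := hge p₁ le_rfl
    have : ((e - 1 : ℕ) : ℕ∞) + 1 + 1 ≤ e :=
      (add_le_add_left ((add_le_add_left a0 1).trans a1) 1).trans (a2.trans a3)
    have : e - 1 + 1 + 1 ≤ e := by exact_mod_cast this
    omega

/-- Regular local ring `(S, n)` of dimension `e ≥ 1` containing a field,
`P` a prime of height `e - 1`, `g ∈ n` with `P + (g)` being `n`-primary.  Then there is a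
short exact sequence `0 → H_P^{e-1}(S) → (H_P^{e-1}(S))_g → H_n^e(S) → 0` whose first map
is the natural localization map. -/
theorem stmt11 (S : Type) [CommRing S] [IsLocalRing S]
    (hreg : IsRegularLocal S) (hfield : ContainsField S)
    (e : ℕ) (he : 1 ≤ e) (hdim : ringKrullDim S = (e : WithBot ℕ∞))
    (P : Ideal S) [P.IsPrime] (hP : idealHeight S P = ((e - 1 : ℕ) : ℕ∞))
    (g : S) (hg : g ∈ IsLocalRing.maximalIdeal S)
    (hprim : (P ⊔ Ideal.span {g}).radical = IsLocalRing.maximalIdeal S) :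
    Function.Injective
        (LocalizedModule.mkLinearMap (Submonoid.powers g) (LocalCohomologyMod S P (e - 1))) ∧
      ∃ π : LocalizedModule (Submonoid.powers g) (LocalCohomologyMod S P (e - 1)) →ₗ[S]
          LocalCohomologyMod S (IsLocalRing.maximalIdeal S) e,
        Function.Surjective π ∧
          LinearMap.ker π =
            LinearMap.range
              (LocalizedModule.mkLinearMap (Submonoid.powers g)
                (LocalCohomologyMod S P (e - 1))) := by
  classical
  obtain ⟨hN, s, hs, hcard⟩ := hreg
  have hse : s.card = e := by rw [hdim] at hcard; exact_mod_cast hcard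
  obtain ⟨hPm, hPq⟩ := lcx_height e he hdim P hP
  have hrs : Ideal.ofList s.toList = IsLocalRing.maximalIdeal S := by
    rw [← hs, Ideal.ofList]; congr 1; ext; simp
  have hlen : s.toList.length = e := by rw [Finset.length_toList, hse]
  have hwr := lcx_reg e S s.toList hrs hlen hdim.ge
  have hgP : g ∉ P := by
    intro h
    apply hPm
    rw [← hprim, sup_eq_left.2 ((Ideal.span_singleton_le_iff_mem _).2 h)]
    exact (Ideal.IsPrime.radical inferInstance).symm
  have hgtP : ∀ t, g ^ t ∉ P := fun t h => hgP (Ideal.IsPrime.mem_of_pow_mem inferInstance t h)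
  have hc : ∀ t x, g ^ t * x ∈ lcx_symb P t → x ∈ lcx_symb P t := fun t x h =>
    lcx_symb_reg P t (g ^ t) x (hgtP t) h
  let J : ℕ → Ideal S := fun t => lcx_symb P t ⊔ Ideal.span {g ^ t}
  have hJ : Antitone J := by
    intro t t' h
    refine sup_le_sup (lcx_symb_anti P h) ?_
    rw [Ideal.span_singleton_le_span_singleton]
    exact pow_dvd_pow g h
  have hradP : ∀ t, P ≤ (lcx_symb P t).radical := by
    intro t x hx
    exact ⟨t, lcx_pow_le_symb P t (Ideal.pow_mem_pow hx t)⟩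
  have hradJ : ∀ t, IsLocalRing.maximalIdeal S ≤ (J t).radical := by
    intro t
    rw [← hprim]
    refine Ideal.radical_le_radical_iff.2 (sup_le ?_ ?_)
    · exact (hradP t).trans (Ideal.radical_mono le_sup_left)
    · rw [Ideal.span_singleton_le_iff_mem]
      exact ⟨t, Ideal.mem_sup_right (Ideal.mem_span_singleton_self _)⟩
  have hPle : P ≤ IsLocalRing.maximalIdeal S :=
    IsLocalRing.le_maximalIdeal (Ideal.IsPrime.ne_top inferInstance)
  have hcofP : ∀ k, ∃ t, lcx_symb P t ≤ P ^ k := fun k =>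
    lcx_symb_cof e s hs hse.le hdim.ge P hPq k
  have hcofJ : ∀ k, ∃ t, J t ≤ IsLocalRing.maximalIdeal S ^ k := by
    intro k
    obtain ⟨t, ht⟩ := hcofP k
    refine ⟨max t k, sup_le ?_ ?_⟩
    · exact (lcx_symb_anti P (le_max_left _ _)).trans (ht.trans (Ideal.pow_right_mono hPle k))
    · rw [Ideal.span_singleton_le_iff_mem]
      exact Ideal.pow_le_pow_right (le_max_right _ _) (Ideal.pow_mem_pow hg _)
  have hlow : ∀ t, Subsingleton
      (Abelian.Ext (ModuleCat.of S (S ⧸ J t)) (ModuleCat.of S S) (e - 1)) := fun t =>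
    lcx_low s.toList hrs hwr (J t) (hradJ t) (e - 1) (by omega)
  have hhigh : ∀ t, Subsingleton
      (Abelian.Ext (ModuleCat.of S (S ⧸ J t)) (ModuleCat.of S S) (e + 1)) := by
    intro t
    have := lcx_high s.toList hrs hwr (S ⧸ J t) inferInstance (lcx_supp (J t) (hradJ t))
    rw [hlen] at this
    exact HasProjectiveDimensionLT.subsingleton _ (e + 1) (e + 1) le_rfl _
  have htop : ∀ t, Subsingleton
      (Abelian.Ext (ModuleCat.of S (S ⧸ lcx_symb P t)) (ModuleCat.of S S) e) := by
    intro t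
    rcases Nat.eq_zero_or_pos t with rfl | ht
    · have h1 : lcx_symb P 0 = ⊤ := top_le_iff.1 (by simpa using lcx_pow_le_symb P 0)
      have h2 : Subsingleton (S ⧸ lcx_symb P 0) := Ideal.Quotient.subsingleton_iff.2 h1
      have h3 : Limits.IsZero (ModuleCat.of S (S ⧸ lcx_symb P 0)) :=
        ModuleCat.isZero_of_subsingleton _
      have := h3.hasProjectiveDimensionLT_zero
      exact HasProjectiveDimensionLT.subsingleton _ 0 e (Nat.zero_le _) _
    · exact lcx_top_zero _ (g ^ t) (hc t) (Ideal.pow_mem_of_mem _ hg t ht) e (hhigh t)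
  have hij : 1 + (e - 1) = e := by omega
  obtain ⟨ι, hι1, hι2, hι3⟩ :=
    lcx_interface P (e - 1) (lcx_symb P) (lcx_symb_anti P) hradP hcofP
  obtain ⟨ι', hι1', hι2', hι3'⟩ :=
    lcx_interface (IsLocalRing.maximalIdeal S) e J hJ hradJ hcofJ
  exact lcx_assemble g
    (fun t => Abelian.Ext (ModuleCat.of S (S ⧸ lcx_symb P t)) (ModuleCat.of S S) (e - 1))
    (fun t => Abelian.Ext (ModuleCat.of S (S ⧸ J t)) (ModuleCat.of S S) e)
    (fun t t' h => lcx_tr (lcx_symb_anti P h) _ (e - 1))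
    (fun t t' h => lcx_tr (hJ h) _ e)
    (fun t u v h1 h2 x => lcx_tr_tr _ _ _ _ x)
    (fun t => lcx_del (lcx_symb P t) (g ^ t) (hc t) _ (e - 1) e hij)
    (fun t => lcx_del_surj _ _ _ _ _ _ _ (htop t))
    (fun t y => lcx_del_smul _ _ _ _ _ _ _ y)
    (fun t x hx => lcx_del_ker _ _ _ _ _ _ _ x hx)
    (fun t y hy => lcx_mul_inj _ _ (hc t) _ _ (hlow t) y hy)
    (fun t t' h x => lcx_del_nat (lcx_symb_anti P h) (g ^ t) (g ^ t') (g ^ (t' - t))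
      (by rw [← pow_add, Nat.sub_add_cancel h]) (hJ h) (hc t) (hc t') _ _ _ hij x)
    (LocalCohomologyMod S P (e - 1)) (LocalCohomologyMod S (IsLocalRing.maximalIdeal S) e)
    ι ι' hι1 hι1' hι2 hι2' hι3 hι3'
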